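/- (Global strong integration error of LMC, Theorem 1 instantiated to Langevin dynamics) Let f : ℝ^d → ℝ be three times continuously differentiable with m·I ≼ ∇²f(x) ≼ L·I for all x (0 < m ≤ L), κ = L/m, ∇f(0) = 0, and ‖∇(Δf)(x)‖ ≤ G(1+‖x‖) for all x for some G > 0. Let (x_t) be a solution of the overdamped Langevin dynamics driven by a standard d-dimensional Brownian motion (B_t) with square-integrable initial value x₀, and let (x̄_k) be the LMC iterates with step size h driven by the same Brownian motion, i.e. x̄₀ = x₀ and x̄_k = x̄_{k−1} − h∇f(x̄_{k−1}) + √2 (B_{kh} − B_{(k−1)h}). Then for every h with 0 < h ≤ 1/(4κL) and every k ≥ 0: (E‖x_{kh} − x̄_k‖²)^{1/2} ≤ C_LMC · h, where C_LMC = (10(L² + G)/m^{3/2}) · √(2d + m(E‖x₀‖² + 1)). -/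

import Mathlib

open MeasureTheory ProbabilityTheory Real
open scoped ENNReal NNReal

noncomputable section

/-- `ℝ^d` with the Euclidean structure. -/
abbrev Euc (d : ℕ) := EuclideanSpace ℝ (Fin d)

/-- The standard Gaussian measure `N(0, I_d)` on `ℝ^d`. -/
noncomputable def stdGaussian (d : ℕ) : Measure (Euc d) :=
  (Measure.pi fun _ : Fin d => gaussianReal 0 1).map (EuclideanSpace.equiv (Fin d) ℝ).symm

/-- The centered Gaussian measure on `ℝ^d` with covariance `σ2 • I_d`. -/
noncomputable def isoGaussian (d : ℕ) (σ2 : ℝ) : Measure (Euc d) :=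
  (stdGaussian d).map fun x => Real.sqrt σ2 • x

/-- `B` is a standard `d`-dimensional Brownian motion with respect to the filtration `ℱ`
under the probability measure `P`. -/
structure IsStdBrownian {d : ℕ} {Ω : Type*} {mΩ : MeasurableSpace Ω} (P : Measure Ω)
    (ℱ : Filtration ℝ mΩ) (B : ℝ → Ω → Euc d) : Prop where
  init : ∀ ω, B 0 ω = 0
  cont : ∀ ω, Continuous fun t => B t ω
  adapted : StronglyAdapted ℱ B
  incr_law : ∀ s t : ℝ, 0 ≤ s → s ≤ t →
    P.map (fun ω => B t ω - B s ω) = isoGaussian d (t - s)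
  incr_indep : ∀ s t : ℝ, 0 ≤ s → s ≤ t →
    Indep (MeasurableSpace.comap (fun ω => B t ω - B s ω) inferInstance) (ℱ s) P

/-- `X` is a (pathwise) solution of the overdamped Langevin dynamics
`dX_t = -∇f(X_t) dt + √2 dB_t`: a continuous adapted process satisfying the integral
equation `X_t = X_0 - ∫₀ᵗ ∇f(X_s) ds + √2 B_t` for all `t ≥ 0`. -/
structure IsLangevinSolution {d : ℕ} {Ω : Type*} {mΩ : MeasurableSpace Ω}
    (ℱ : Filtration ℝ mΩ) (f : Euc d → ℝ) (B : ℝ → Ω → Euc d) (X : ℝ → Ω → Euc d) : Prop where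
  cont : ∀ ω, Continuous fun t => X t ω
  adapted : StronglyAdapted ℱ X
  eqn : ∀ ω, ∀ t : ℝ, 0 ≤ t →
    X t ω = X 0 ω - (∫ s in (0:ℝ)..t, gradient f (X s ω)) + Real.sqrt 2 • B t ω

/-- The Hessian bounds `m • I ≼ ∇²f(x) ≼ L • I` for all `x`, expressed through the second
iterated Fréchet derivative: `m ‖v‖² ≤ ⟨v, ∇²f(x) v⟩ ≤ L ‖v‖²`. -/
def HessianBounds {d : ℕ} (m L : ℝ) (f : Euc d → ℝ) : Prop :=
  ∀ x v : Euc d, m * ‖v‖ ^ 2 ≤ iteratedFDeriv ℝ 2 f x ![v, v] ∧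
    iteratedFDeriv ℝ 2 f x ![v, v] ≤ L * ‖v‖ ^ 2

end

/-- The Laplacian of `f : ℝ^d → ℝ`, i.e. the trace of its Hessian. -/
noncomputable def lapl {d : ℕ} (f : Euc d → ℝ) (x : Euc d) : ℝ :=
  ∑ i : Fin d,
    iteratedFDeriv ℝ 2 f x ![EuclideanSpace.single i (1:ℝ), EuclideanSpace.single i (1:ℝ)]

/-!
Write the Langevin solution on one step of length `h` as a gradient step plus noise plus a local
error. The local error splits into the effect of the drift on the path, of size `O(h²)` in `L²`,
and the effect of the noise on the drift, which is only `O(h^{3/2})` in `L²` but has conditional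
mean `O(h²)`: averaging `∇f` over a Gaussian of covariance `s² I` changes it by `O(s²)`. Indeed the
Gaussian averages `u` of `f` satisfy `∂ₛ u = s Δu`, so the change of `∇f` is controlled by the
Lipschitz constant of `Δf`, and this is where the bound on `∇(Δf)` enters.

The gradient step contracts distances by `1 - mh`. In the expansion of `E‖X_{(k+1)h} - x̄_{k+1}‖²`
the cross term of the contracted error, which is known at time `kh`, with the local error sees only
the conditional mean `O(h²)`, while the local error squared contributes `O(h³)`. A loss of `2mh` per
step absorbs both, which leaves an error `O(h)` uniformly in `k`. The same one-step decomposition,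
where the noise now adds `2dh` to the second moment, bounds the moments of `X` on the grid.
-/

section Hessian

open InnerProductSpace

variable {E : Type*} [NormedAddCommGroup E] [InnerProductSpace ℝ E]

theorem opNorm_le_of_isSymmetric_of_abs_inner_le {T : E →L[ℝ] E} {c : ℝ} (hc : 0 ≤ c)
    (hT : T.IsSymmetric) (h : ∀ v, |inner ℝ (T v) v| ≤ c * ‖v‖ ^ 2) : ‖T‖ ≤ c := by
  rw [T.norm_eq_iSup_rayleighQuotient hT]
  refine Real.iSup_le (fun v ↦ ?_) hc
  rw [ContinuousLinearMap.rayleighQuotient, abs_div, abs_sq]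
  exact div_le_of_le_mul₀ (sq_nonneg _) hc (h v)

variable [CompleteSpace E] {f : E → ℝ}

theorem gradient_eq_toDual_symm_comp_fderiv :
    gradient f = (toDual ℝ E).symm.toContinuousLinearEquiv ∘ fderiv ℝ f := rfl

theorem norm_fderiv_eq_norm_gradient (x : E) : ‖fderiv ℝ f x‖ = ‖gradient f x‖ :=
  ((toDual ℝ E).symm.norm_map _).symm

theorem lipschitzWith_gradient_iff {K : ℝ≥0} :
    LipschitzWith K (gradient f) ↔ LipschitzWith K (fderiv ℝ f) :=
  (toDual ℝ E).symm.isometry.lipschitzWith_iff K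

theorem contDiff_gradient {n : ℕ} (hf : ContDiff ℝ (n + 1) f) : ContDiff ℝ n (gradient f) := by
  rw [gradient_eq_toDual_symm_comp_fderiv]
  exact (ContinuousLinearEquiv.contDiff _).comp (hf.fderiv_right le_rfl)

theorem inner_fderiv_gradient_apply (x v w : E) :
    inner ℝ (fderiv ℝ (gradient f) x v) w = iteratedFDeriv ℝ 2 f x ![v, w] := by
  rw [gradient_eq_toDual_symm_comp_fderiv, ContinuousLinearEquiv.comp_fderiv,
    iteratedFDeriv_two_apply]
  exact toDual_symm_apply

theorem isSymmetric_fderiv_gradient (hf : ContDiff ℝ 2 f) (x : E) :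
    (fderiv ℝ (gradient f) x).IsSymmetric := fun v w ↦ by
  change inner ℝ (fderiv ℝ (gradient f) x v) w = inner ℝ v (fderiv ℝ (gradient f) x w)
  rw [real_inner_comm _ v, inner_fderiv_gradient_apply, inner_fderiv_gradient_apply,
    iteratedFDeriv_two_apply, iteratedFDeriv_two_apply]
  exact (hf.contDiffAt.isSymmSndFDerivAt (by simp)).eq v w

theorem norm_smul_sub_smul_gradient_sub_le (hf : ContDiff ℝ 2 f) {a b c : ℝ} (hc : 0 ≤ c)
    (h : ∀ x v, |a * ‖v‖ ^ 2 - b * iteratedFDeriv ℝ 2 f x ![v, v]| ≤ c * ‖v‖ ^ 2) (x y : E) :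
    ‖(a • x - b • gradient f x) - (a • y - b • gradient f y)‖ ≤ c * ‖x - y‖ := by
  have hgrad : Differentiable ℝ (gradient f) :=
    (contDiff_gradient (n := 1) (by exact_mod_cast hf)).differentiable (by simp)
  have hderiv (z : E) : HasFDerivAt (fun z ↦ a • z - b • gradient f z)
      (a • ContinuousLinearMap.id ℝ E - b • fderiv ℝ (gradient f) z) z :=
    ((hasFDerivAt_id z).const_smul a).sub ((hgrad z).hasFDerivAt.const_smul b)
  refine convex_univ.norm_image_sub_le_of_norm_hasFDerivWithin_le
    (fun z _ ↦ (hderiv z).hasFDerivWithinAt) (fun z _ ↦ ?_) (Set.mem_univ y) (Set.mem_univ x)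
  refine opNorm_le_of_isSymmetric_of_abs_inner_le hc (fun v w ↦ ?_) fun v ↦ ?_
  · have := isSymmetric_fderiv_gradient hf z v w
    simp_all [inner_sub_left, inner_sub_right, inner_smul_left, inner_smul_right]
  · simpa [inner_sub_left, inner_smul_left, inner_fderiv_gradient_apply] using h z v

end Hessian

section GradientStep

variable {E : Type*} [NormedAddCommGroup E] [InnerProductSpace ℝ E] [CompleteSpace E]

/-- A step of size `h` of gradient descent for `f`. -/
noncomputable def gradientStep (f : E → ℝ) (h : ℝ) (x : E) : E := x - h • gradient f x

theorem gradientStep_zero {f : E → ℝ} (hg0 : gradient f 0 = 0) (h : ℝ) :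
    gradientStep f h 0 = 0 := by
  rw [gradientStep, hg0, smul_zero, sub_zero]

end GradientStep

section HessianBounds

variable {d : ℕ} {f : Euc d → ℝ} {m : ℝ}

theorem lapl_eq_laplacian (f : Euc d → ℝ) : lapl f = Laplacian.laplacian f := by
  rw [InnerProductSpace.laplacian_eq_iteratedFDeriv_orthonormalBasis f
    (EuclideanSpace.basisFun (Fin d) ℝ)]
  simp [funext_iff, lapl]

theorem lipschitzWith_gradient_of_hessianBounds {L : ℝ≥0} (hf : ContDiff ℝ 2 f) (hm : 0 ≤ m)
    (hHess : HessianBounds m L f) : LipschitzWith L (gradient f) := by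
  have hbound (x v : Euc d) :
      |0 * ‖v‖ ^ 2 - (-1) * iteratedFDeriv ℝ 2 f x ![v, v]| ≤ L * ‖v‖ ^ 2 := by
    obtain ⟨hlower, hupper⟩ := hHess x v
    have : 0 ≤ m * ‖v‖ ^ 2 := by positivity
    rw [abs_le]
    constructor <;> linarith
  refine LipschitzWith.of_dist_le_mul fun x y ↦ ?_
  simpa [dist_eq_norm] using norm_smul_sub_smul_gradient_sub_le hf L.coe_nonneg hbound x y

theorem lipschitzWith_gradientStep {L : ℝ} (hf : ContDiff ℝ 2 f) (hmL : m ≤ L)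
    (hHess : HessianBounds m L f) {h : ℝ} (hh : 0 ≤ h) (hLh : L * h ≤ 1) :
    LipschitzWith (1 - m * h).toNNReal (gradientStep f h) := by
  have hmh : m * h ≤ L * h := by gcongr
  have hρ : 0 ≤ 1 - m * h := by linarith
  have hbound (z v : Euc d) :
      |1 * ‖v‖ ^ 2 - h * iteratedFDeriv ℝ 2 f z ![v, v]| ≤ (1 - m * h) * ‖v‖ ^ 2 := by
    obtain ⟨hlower, hupper⟩ := hHess z v
    rw [abs_le]
    constructor <;> nlinarith [sq_nonneg ‖v‖]
  refine LipschitzWith.of_dist_le_mul fun x y ↦ ?_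
  rw [Real.coe_toNNReal _ hρ]
  simpa [dist_eq_norm, gradientStep] using norm_smul_sub_smul_gradient_sub_le hf hρ hbound x y

end HessianBounds

section LipschitzDerivative

variable {E : Type*} [NormedAddCommGroup E] {F : E → ℝ} {K : ℝ≥0}

section NormedSpace

variable [NormedSpace ℝ E]

theorem norm_fderiv_add_le (hlip : LipschitzWith K (fderiv ℝ F)) (x w : E) :
    ‖fderiv ℝ F (x + w)‖ ≤ ‖fderiv ℝ F x‖ + K * ‖w‖ := by
  have h := hlip.norm_sub_le (x + w) x
  rw [add_sub_cancel_left] at h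
  linarith [norm_le_norm_add_norm_sub' (fderiv ℝ F (x + w)) (fderiv ℝ F x)]

theorem norm_add_le_of_lipschitzWith_fderiv (hF : Differentiable ℝ F)
    (hlip : LipschitzWith K (fderiv ℝ F)) (x w : E) :
    ‖F (x + w)‖ ≤ ‖F x‖ + (‖fderiv ℝ F x‖ + K * ‖w‖) * ‖w‖ := by
  have hbound (y) (hy : y ∈ Metric.closedBall x ‖w‖) :
      ‖fderiv ℝ F y‖ ≤ ‖fderiv ℝ F x‖ + K * ‖w‖ := by
    have h := norm_fderiv_add_le hlip x (y - x)
    rw [add_sub_cancel] at h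
    grw [h, mem_closedBall_iff_norm.1 hy]
  have h := (convex_closedBall x ‖w‖).norm_image_sub_le_of_norm_fderiv_le (fun y _ ↦ hF y) hbound
    (Metric.mem_closedBall_self (norm_nonneg w)) (y := x + w) (by simp)
  rw [add_sub_cancel_left] at h
  linarith [norm_le_norm_add_norm_sub' (F (x + w)) (F x)]

end NormedSpace

open Laplacian Module

variable [InnerProductSpace ℝ E] [FiniteDimensional ℝ E]

theorem laplacian_eq_sum_fderiv_fderiv {ι : Type*} [Fintype ι] (b : OrthonormalBasis ι ℝ E)
    (x : E) : Δ F x = ∑ i, fderiv ℝ (fderiv ℝ F) x (b i) (b i) := by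
  simp [InnerProductSpace.laplacian_eq_iteratedFDeriv_orthonormalBasis F b,
    iteratedFDeriv_two_apply]

theorem abs_laplacian_le (hlip : LipschitzWith K (fderiv ℝ F)) (x : E) :
    |Δ F x| ≤ finrank ℝ E * K := by
  set b := stdOrthonormalBasis ℝ E
  have hterm (i) : |fderiv ℝ (fderiv ℝ F) x (b i) (b i)| ≤ K := by
    simpa using (fderiv ℝ (fderiv ℝ F) x).le_of_opNorm₂_le_of_le
      (norm_fderiv_le_of_lipschitz ℝ hlip) (b.norm_eq_one i).le (b.norm_eq_one i).le
  calc |Δ F x| ≤ ∑ i, |fderiv ℝ (fderiv ℝ F) x (b i) (b i)| := by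
        rw [laplacian_eq_sum_fderiv_fderiv b]
        exact Finset.abs_sum_le_sum_abs _ _
    _ ≤ ∑ _i : Fin (finrank ℝ E), (K : ℝ) := Finset.sum_le_sum fun i _ ↦ hterm i
    _ = finrank ℝ E * K := by simp

theorem contDiff_laplacian {n : ℕ} (hF : ContDiff ℝ (n + 2) F) : ContDiff ℝ n (Δ F) := by
  rw [funext (laplacian_eq_sum_fderiv_fderiv (stdOrthonormalBasis ℝ E))]
  have h1 : ContDiff ℝ (n + 1) (fderiv ℝ F) := hF.fderiv_right (by norm_cast)
  have : ContDiff ℝ n (fderiv ℝ (fderiv ℝ F)) := h1.fderiv_right le_rfl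
  fun_prop

theorem abs_laplacian_add_sub_le (hF : ContDiff ℝ 3 F) {G : ℝ} (hG : 0 ≤ G)
    (hΔ : ∀ x, ‖fderiv ℝ (Δ F) x‖ ≤ G * (1 + ‖x‖)) (x w : E) :
    |Δ F (x + w) - Δ F x| ≤ G * (1 + ‖x‖ + ‖w‖) * ‖w‖ := by
  have hbound (y) (hy : y ∈ Metric.closedBall x ‖w‖) :
      ‖fderiv ℝ (Δ F) y‖ ≤ G * (1 + ‖x‖ + ‖w‖) := by
    grw [hΔ, norm_le_norm_add_norm_sub' y x, mem_closedBall_iff_norm.1 hy, add_assoc]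
  have h := (convex_closedBall x ‖w‖).norm_image_sub_le_of_norm_fderiv_le
    (fun y _ ↦ (contDiff_laplacian (n := 1) hF).differentiable (by simp) y) hbound
    (Metric.mem_closedBall_self (norm_nonneg w)) (y := x + w) (by simp)
  rwa [add_sub_cancel_left] at h

end LipschitzDerivative

section Gaussian

open Module

variable {E : Type*} [NormedAddCommGroup E] [InnerProductSpace ℝ E]

local notation "γ" => ProbabilityTheory.stdGaussian

/-- The Lebesgue density `(2π)^(-n/2) exp (-‖z‖²/2)` of the standard Gaussian measure of an
`n`-dimensional inner product space. -/
noncomputable def stdGaussianDensity (z : E) : ℝ :=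
  (2 * π) ^ (-(finrank ℝ E / 2 : ℝ)) * rexp (-(1 / 2) * ‖z‖ ^ 2)

theorem stdGaussianDensity_nonneg (z : E) : 0 ≤ stdGaussianDensity z := by
  unfold stdGaussianDensity; positivity

theorem hasFDerivAt_stdGaussianDensity (z : E) :
    HasFDerivAt stdGaussianDensity (-stdGaussianDensity z • innerSL ℝ z) z := by
  have h := (((hasStrictFDerivAt_norm_sq z).hasFDerivAt.const_mul (-(1 / 2))).exp).const_mul
    ((2 * π) ^ (-(finrank ℝ E / 2 : ℝ)))
  refine h.congr_fderiv ?_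
  ext v
  simp [stdGaussianDensity, mul_assoc]

variable [FiniteDimensional ℝ E] [MeasurableSpace E] [BorelSpace E]

theorem integrable_stdGaussianDensity :
    Integrable (stdGaussianDensity : E → ℝ) :=
  .const_mul (by
    have h := (GaussianFourier.integrable_cexp_neg_mul_sq_norm_add (V := E) (b := 1 / 2)
      (by norm_num) 0 0).re
    refine h.congr (.of_forall fun z ↦ ?_)
    have hexponent : -(1 / 2 : ℂ) * ‖z‖ ^ 2 + 0 * inner ℝ 0 z =
        ((-(1 / 2) * ‖z‖ ^ 2 : ℝ) : ℂ) := by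
      push_cast
      ring
    exact (congrArg (fun w ↦ (Complex.exp w).re) hexponent).trans (Complex.exp_ofReal_re _)) _

theorem stdGaussian_eq_withDensity :
    γ E = volume.withDensity fun z ↦ ENNReal.ofReal (stdGaussianDensity z) := by
  have : IsFiniteMeasure (volume.withDensity fun z : E ↦ ENNReal.ofReal (stdGaussianDensity z)) :=
    isFiniteMeasure_withDensity_ofReal integrable_stdGaussianDensity.2
  refine Measure.ext_of_charFun (funext fun t ↦ ?_)
  have hexp (z : E) : stdGaussianDensity z • Complex.exp (inner ℝ z t * Complex.I) =
      ((2 * π) ^ (-(finrank ℝ E / 2 : ℝ)) : ℝ) *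
        Complex.exp (-(1 / 2 : ℂ) * ‖z‖ ^ 2 + Complex.I * inner ℝ t z) := by
    rw [stdGaussianDensity, real_inner_comm, Complex.exp_add, Complex.real_smul]
    push_cast
    ring_nf
  rw [charFun_stdGaussian, charFun_apply, integral_withDensity_eq_integral_toReal_smul₀
    integrable_stdGaussianDensity.1.aemeasurable.ennreal_ofReal (by simp)]
  simp_rw [ENNReal.toReal_ofReal (stdGaussianDensity_nonneg _), hexp, integral_const_mul]
  rw [GaussianFourier.integral_cexp_neg_mul_sq_norm_add (by norm_num)]
  have hconst : (((2 * π) ^ (-(finrank ℝ E / 2 : ℝ)) : ℝ) : ℂ) *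
      (π / (1 / 2 : ℂ)) ^ (finrank ℝ E / 2 : ℂ) = 1 := by
    have h2π : (π / (1 / 2 : ℂ)) = ((2 * π : ℝ) : ℂ) := by push_cast; ring
    have hn : (finrank ℝ E / 2 : ℂ) = ((finrank ℝ E / 2 : ℝ) : ℂ) := by push_cast; rfl
    rw [h2π, hn, ← Complex.ofReal_cpow (by positivity), ← Complex.ofReal_mul,
      ← Real.rpow_add (by positivity), neg_add_cancel, Real.rpow_zero, Complex.ofReal_one]
  rw [← mul_assoc, hconst, one_mul, Complex.I_sq]
  ring_nf

theorem integrable_stdGaussian_iff {u : E → ℝ} :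
    Integrable u (γ E) ↔ Integrable fun z ↦ stdGaussianDensity z * u z := by
  rw [stdGaussian_eq_withDensity, integrable_withDensity_iff_integrable_smul₀'
    integrable_stdGaussianDensity.1.aemeasurable.ennreal_ofReal (by simp)]
  simp_rw [ENNReal.toReal_ofReal (stdGaussianDensity_nonneg _), smul_eq_mul]

theorem integral_stdGaussian (u : E → ℝ) :
    ∫ z, u z ∂γ E = ∫ z, stdGaussianDensity z * u z := by
  rw [stdGaussian_eq_withDensity, integral_withDensity_eq_integral_toReal_smul₀
    integrable_stdGaussianDensity.1.aemeasurable.ennreal_ofReal (by simp)]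
  simp_rw [ENNReal.toReal_ofReal (stdGaussianDensity_nonneg _), smul_eq_mul]

theorem integral_inner_mul_stdGaussian {u : E → ℝ} (hu : Differentiable ℝ u) (e : E)
    (hint : Integrable u (γ E)) (hint_inner : Integrable (fun z ↦ inner ℝ e z * u z) (γ E))
    (hint_fderiv : Integrable (fun z ↦ fderiv ℝ u z e) (γ E)) :
    ∫ z, inner ℝ e z * u z ∂γ E = ∫ z, fderiv ℝ u z e ∂γ E := by
  have hfderiv (z : E) : fderiv ℝ stdGaussianDensity z e =
      -(stdGaussianDensity z * inner ℝ e z) := by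
    simp [(hasFDerivAt_stdGaussianDensity z).fderiv, real_inner_comm]
  rw [integrable_stdGaussian_iff] at hint hint_inner hint_fderiv
  rw [integral_stdGaussian, integral_stdGaussian,
    integral_mul_fderiv_eq_neg_fderiv_mul_of_integrable ?_ hint_fderiv hint
      (fun z _ ↦ (hasFDerivAt_stdGaussianDensity z).differentiableAt) fun z _ ↦ hu z]
  · simp_rw [hfderiv, neg_mul, integral_neg, neg_neg, mul_assoc]
  · refine hint_inner.neg.congr (.of_forall fun z ↦ ?_)
    simp only [Pi.neg_apply, hfderiv, neg_mul, mul_assoc]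

theorem integrable_norm_pow_stdGaussian (n : ℕ) : Integrable (fun z : E ↦ ‖z‖ ^ n) (γ E) :=
  (IsGaussian.memLp_id (γ E) n (by simp)).integrable_norm_pow'

theorem integrable_stdGaussian_of_norm_le_quadratic {V : Type*} [NormedAddCommGroup V] {u : E → V}
    (hu : Continuous u) {a b c : ℝ} (h : ∀ z, ‖u z‖ ≤ a + b * ‖z‖ + c * ‖z‖ ^ 2) :
    Integrable u (γ E) := by
  have hlinear : Integrable (fun z : E ↦ b * ‖z‖) (γ E) := by
    simpa using (integrable_norm_pow_stdGaussian (E := E) 1).const_mul b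
  exact (((integrable_const a).add hlinear).add
    ((integrable_norm_pow_stdGaussian 2).const_mul c)).mono' hu.aestronglyMeasurable (.of_forall h)

theorem integral_inner_sq_stdGaussian (e : E) : ∫ z, inner ℝ e z ^ 2 ∂γ E = ‖e‖ ^ 2 := by
  rw [← innerSL_apply_norm (𝕜 := ℝ) e, ← variance_dual_stdGaussian, variance_of_integral_eq_zero
    (innerSL ℝ e).continuous.aemeasurable (integral_strongDual_stdGaussian _)]
  rfl

theorem integral_norm_sq_stdGaussian : ∫ z : E, ‖z‖ ^ 2 ∂γ E = finrank ℝ E := by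
  have hint (i) : Integrable (fun z ↦ inner ℝ (stdOrthonormalBasis ℝ E i) z ^ 2) (γ E) :=
    (IsGaussian.memLp_two_id.const_inner (𝕜 := ℝ) (stdOrthonormalBasis ℝ E i)).integrable_sq
  simp_rw [← (stdOrthonormalBasis ℝ E).sum_sq_inner_right]
  rw [integral_finsetSum _ fun i _ ↦ hint i]
  simp [integral_inner_sq_stdGaussian]

theorem integral_norm_stdGaussian_le : ∫ z : E, ‖z‖ ∂γ E ≤ √(finrank ℝ E) := by
  have hvar := variance_eq_sub (IsGaussian.memLp_two_id (μ := γ E)).norm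
  simp only [Pi.pow_apply, id_eq, integral_norm_sq_stdGaussian] at hvar
  exact Real.le_sqrt_of_sq_le (by linarith [variance_nonneg (fun z : E ↦ ‖z‖) (γ E)])

variable {F : E → ℝ} {K : ℝ≥0}

theorem integrable_fderiv_add_smul (hF : ContDiff ℝ 1 F) (hlip : LipschitzWith K (fderiv ℝ F))
    (s : ℝ) (x : E) : Integrable (fun z ↦ fderiv ℝ F (x + s • z)) (γ E) := by
  refine integrable_stdGaussian_of_norm_le_quadratic
    (a := ‖fderiv ℝ F x‖) (b := K * |s|) (c := 0)
    ((hF.continuous_fderiv (by simp)).comp (by fun_prop)) fun z ↦ ?_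
  have h := norm_fderiv_add_le hlip x (s • z)
  rw [norm_smul, Real.norm_eq_abs] at h
  linarith

theorem integrable_comp_add_smul (hF : ContDiff ℝ 1 F) (hlip : LipschitzWith K (fderiv ℝ F))
    (s : ℝ) (x : E) : Integrable (fun z ↦ F (x + s • z)) (γ E) := by
  refine integrable_stdGaussian_of_norm_le_quadratic
    (a := ‖F x‖) (b := ‖fderiv ℝ F x‖ * |s|) (c := K * |s| ^ 2)
    (hF.continuous.comp (by fun_prop)) fun z ↦ ?_
  have h := norm_add_le_of_lipschitzWith_fderiv (hF.differentiable (by simp)) hlip x (s • z)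
  rw [norm_smul, Real.norm_eq_abs s] at h
  linarith

/-- The convolution of `F` with the centred Gaussian measure of covariance `s² • id`; as a function
of the standard deviation `s` it solves `∂ₛ u = s Δ u`. -/
noncomputable def gaussianSmoothing (F : E → ℝ) (s : ℝ) (x : E) : ℝ := ∫ z, F (x + s • z) ∂γ E

open Laplacian

theorem integrable_inner_mul_fderiv_add_smul (hF : ContDiff ℝ 1 F)
    (hlip : LipschitzWith K (fderiv ℝ F)) (s : ℝ) (x e : E) :
    Integrable (fun z ↦ inner ℝ e z * fderiv ℝ F (x + s • z) e) (γ E) := by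
  have : Continuous (fderiv ℝ F) := hF.continuous_fderiv (by simp)
  refine integrable_stdGaussian_of_norm_le_quadratic
    (a := 0) (b := ‖e‖ ^ 2 * ‖fderiv ℝ F x‖) (c := ‖e‖ ^ 2 * (K * |s|)) (by fun_prop) fun z ↦ ?_
  grw [norm_mul, norm_inner_le_norm, ContinuousLinearMap.le_opNorm, norm_fderiv_add_le hlip,
    norm_smul, Real.norm_eq_abs]
  exact le_of_eq (by ring)

theorem integrable_fderiv_fderiv_add_smul (hF : ContDiff ℝ 2 F)
    (hlip : LipschitzWith K (fderiv ℝ F)) (s : ℝ) (x e : E) :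
    Integrable (fun z ↦ fderiv ℝ (fderiv ℝ F) (x + s • z) e e) (γ E) := by
  have : Continuous (fderiv ℝ (fderiv ℝ F)) :=
    (hF.fderiv_right (m := 1) (by norm_num)).continuous_fderiv (by simp)
  refine integrable_stdGaussian_of_norm_le_quadratic (a := K * ‖e‖ * ‖e‖) (b := 0) (c := 0)
    (by fun_prop) fun z ↦ ?_
  simpa using (fderiv ℝ (fderiv ℝ F) (x + s • z)).le_of_opNorm₂_le_of_le
    (norm_fderiv_le_of_lipschitz ℝ hlip) le_rfl le_rfl

theorem integral_inner_mul_fderiv_add_smul (hF : ContDiff ℝ 2 F)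
    (hlip : LipschitzWith K (fderiv ℝ F)) (s : ℝ) (x e : E) :
    ∫ z, inner ℝ e z * fderiv ℝ F (x + s • z) e ∂γ E =
      s * ∫ z, fderiv ℝ (fderiv ℝ F) (x + s • z) e e ∂γ E := by
  have hC1 : ContDiff ℝ 1 F := hF.of_le one_le_two
  have hF' : Differentiable ℝ (fderiv ℝ F) :=
    (hF.fderiv_right (m := 1) (by norm_num)).differentiable (by simp)
  have hderiv (z : E) : HasFDerivAt (fun z ↦ fderiv ℝ F (x + s • z) e)
      (s • (fderiv ℝ (fderiv ℝ F) (x + s • z)).flip e) z :=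
    (((hF' _).hasFDerivAt.comp z (((hasFDerivAt_id z).const_smul s).const_add x)).clm_apply
      (hasFDerivAt_const e z)).congr_fderiv (by ext; simp)
  have hfderiv (z : E) : fderiv ℝ (fun z ↦ fderiv ℝ F (x + s • z) e) z e =
      s * fderiv ℝ (fderiv ℝ F) (x + s • z) e e := by simp [(hderiv z).fderiv]
  rw [integral_inner_mul_stdGaussian (fun z ↦ (hderiv z).differentiableAt) e
    ((integrable_fderiv_add_smul hC1 hlip s x).apply_continuousLinearMap e)
    (integrable_inner_mul_fderiv_add_smul hC1 hlip s x e)]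
  · simp_rw [hfderiv, integral_const_mul]
  · simp_rw [hfderiv]
    exact (integrable_fderiv_fderiv_add_smul hF hlip s x e).const_mul s

theorem integral_fderiv_add_smul_apply_self (hF : ContDiff ℝ 2 F)
    (hlip : LipschitzWith K (fderiv ℝ F)) (s : ℝ) (x : E) :
    ∫ z, fderiv ℝ F (x + s • z) z ∂γ E = s * gaussianSmoothing (Δ F) s x := by
  have hC1 : ContDiff ℝ 1 F := hF.of_le one_le_two
  set b := stdOrthonormalBasis ℝ E
  have hexpand (z : E) : fderiv ℝ F (x + s • z) z =
      ∑ i, inner ℝ (b i) z * fderiv ℝ F (x + s • z) (b i) :=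
    (congrArg _ (b.sum_repr' z).symm).trans (by simp only [map_sum, map_smul, smul_eq_mul])
  simp_rw [gaussianSmoothing, laplacian_eq_sum_fderiv_fderiv b, hexpand]
  rw [integral_finsetSum _ fun i _ ↦ integrable_inner_mul_fderiv_add_smul hC1 hlip s x (b i),
    integral_finsetSum _ fun i _ ↦ integrable_fderiv_fderiv_add_smul hF hlip s x (b i),
    Finset.mul_sum]
  exact Finset.sum_congr rfl fun i _ ↦ integral_inner_mul_fderiv_add_smul hF hlip s x (b i)

theorem hasDerivAt_gaussianSmoothing (hF : ContDiff ℝ 2 F)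
    (hlip : LipschitzWith K (fderiv ℝ F)) (x : E) (s : ℝ) :
    HasDerivAt (gaussianSmoothing F · x) (s * gaussianSmoothing (Δ F) s x) s := by
  have hC1 : ContDiff ℝ 1 F := hF.of_le one_le_two
  have : Continuous (fderiv ℝ F) := hC1.continuous_fderiv (by simp)
  have hdom : Integrable (fun z : E ↦ (‖fderiv ℝ F x‖ + K * ((|s| + 1) * ‖z‖)) * ‖z‖) (γ E) :=
    integrable_stdGaussian_of_norm_le_quadratic
      (a := 0) (b := ‖fderiv ℝ F x‖) (c := K * (|s| + 1)) (by fun_prop) fun z ↦ by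
        rw [Real.norm_of_nonneg (by positivity)]
        exact le_of_eq (by ring)
  rw [← integral_fderiv_add_smul_apply_self hF hlip]
  refine (hasDerivAt_integral_of_dominated_loc_of_deriv_le
    (F' := fun t z ↦ fderiv ℝ F (x + t • z) z) (Metric.ball_mem_nhds s one_pos)
    (.of_forall fun t ↦ (integrable_comp_add_smul hC1 hlip t x).1)
    (integrable_comp_add_smul hC1 hlip s x)
    (by fun_prop : Continuous _).aestronglyMeasurable (.of_forall fun z t ht ↦ ?_) hdom
    (.of_forall fun z t _ ↦ ?_)).2
  · have ht : |t| ≤ |s| + 1 := by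
      linarith [abs_sub_abs_le_abs_sub t s, (Real.dist_eq t s ▸ Metric.mem_ball.1 ht).le]
    grw [ContinuousLinearMap.le_opNorm, norm_fderiv_add_le hlip, norm_smul, Real.norm_eq_abs, ht]
  · exact ((hC1.differentiable (by simp)).differentiableAt.hasFDerivAt.comp_hasDerivAt t
      (((hasDerivAt_id t).smul_const z).const_add x)).congr_deriv (by simp)

theorem hasFDerivAt_gaussianSmoothing (hF : ContDiff ℝ 1 F)
    (hlip : LipschitzWith K (fderiv ℝ F)) (s : ℝ) (x : E) :
    HasFDerivAt (gaussianSmoothing F s) (∫ z, fderiv ℝ F (x + s • z) ∂γ E) x := by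
  have hdom : Integrable (fun z : E ↦ ‖fderiv ℝ F (x + s • z)‖ + K) (γ E) :=
    (integrable_fderiv_add_smul hF hlip s x).norm.add (integrable_const _)
  refine hasFDerivAt_integral_of_dominated_of_fderiv_le
    (F' := fun y z ↦ fderiv ℝ F (y + s • z)) (Metric.ball_mem_nhds x one_pos)
    (.of_forall fun y ↦ (integrable_comp_add_smul hF hlip s y).1)
    (integrable_comp_add_smul hF hlip s x) (integrable_fderiv_add_smul hF hlip s x).1
    (.of_forall fun z y hy ↦ ?_) hdom (.of_forall fun z y _ ↦ ?_)
  · have h := norm_fderiv_add_le hlip (x + s • z) (y - x)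
    rw [show x + s • z + (y - x) = y + s • z by abel] at h
    grw [h, (mem_ball_iff_norm.1 hy).le, mul_one]
  · exact ((hF.differentiable (by simp)).differentiableAt.hasFDerivAt.comp y
      ((hasFDerivAt_id y).add_const (s • z))).congr_fderiv (by ext; simp)

theorem integrable_laplacian_add_smul (hF : ContDiff ℝ 2 F)
    (hlip : LipschitzWith K (fderiv ℝ F)) (s : ℝ) (x : E) :
    Integrable (fun z ↦ Δ F (x + s • z)) (γ E) :=
  integrable_stdGaussian_of_norm_le_quadratic (a := finrank ℝ E * K) (b := 0) (c := 0)
    ((contDiff_laplacian (n := 0) hF).continuous.comp (by fun_prop)) fun z ↦ by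
      simpa using abs_laplacian_le hlip _

theorem abs_gaussianSmoothing_laplacian_sub_le (hF : ContDiff ℝ 3 F)
    (hlip : LipschitzWith K (fderiv ℝ F)) {G : ℝ} (hG : 0 ≤ G)
    (hΔ : ∀ x, ‖fderiv ℝ (Δ F) x‖ ≤ G * (1 + ‖x‖)) {s : ℝ} (hs : 0 ≤ s) (x w : E) :
    |gaussianSmoothing (Δ F) s (x + w) - gaussianSmoothing (Δ F) s x| ≤
      G * (1 + ‖x‖ + ‖w‖ + s * √(finrank ℝ E)) * ‖w‖ := by
  have hC2 : ContDiff ℝ 2 F := hF.of_le (by norm_num)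
  have hpoint (z : E) : |Δ F (x + w + s • z) - Δ F (x + s • z)| ≤
      G * ‖w‖ * (1 + ‖x‖ + ‖w‖) + G * ‖w‖ * s * ‖z‖ := by
    have h := abs_laplacian_add_sub_le hF hG hΔ (x + s • z) w
    rw [add_right_comm] at h
    grw [h, norm_add_le x, norm_smul, Real.norm_of_nonneg hs]
    exact le_of_eq (by ring)
  have hnorm : Integrable (fun z : E ↦ G * ‖w‖ * s * ‖z‖) (γ E) := by
    simpa using (integrable_norm_pow_stdGaussian (E := E) 1).const_mul (G * ‖w‖ * s)
  rw [gaussianSmoothing, gaussianSmoothing, ← integral_sub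
    (integrable_laplacian_add_smul hC2 hlip s _) (integrable_laplacian_add_smul hC2 hlip s _),
    ← Real.norm_eq_abs]
  calc _ ≤ ∫ z, (G * ‖w‖ * (1 + ‖x‖ + ‖w‖) + G * ‖w‖ * s * ‖z‖) ∂γ E :=
        norm_integral_le_of_norm_le ((integrable_const _).add hnorm) (.of_forall hpoint)
    _ = G * ‖w‖ * (1 + ‖x‖ + ‖w‖) + G * ‖w‖ * s * ∫ z : E, ‖z‖ ∂γ E := by
        rw [integral_add (integrable_const _) hnorm, integral_const, integral_const_mul]; simp
    _ ≤ G * (1 + ‖x‖ + ‖w‖ + s * √(finrank ℝ E)) * ‖w‖ := by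
        grw [integral_norm_stdGaussian_le]
        exact le_of_eq (by ring)

theorem abs_gaussianSmoothing_sub_sub_le (hF : ContDiff ℝ 3 F)
    (hlip : LipschitzWith K (fderiv ℝ F)) {G : ℝ} (hG : 0 ≤ G)
    (hΔ : ∀ x, ‖fderiv ℝ (Δ F) x‖ ≤ G * (1 + ‖x‖)) {s : ℝ} (hs : 0 ≤ s) (x w : E) :
    |(gaussianSmoothing F s (x + w) - F (x + w)) - (gaussianSmoothing F s x - F x)| ≤
      G * (1 + ‖x‖ + ‖w‖ + s * √(finrank ℝ E)) * ‖w‖ * s ^ 2 := by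
  have hC2 : ContDiff ℝ 2 F := hF.of_le (by norm_num)
  set Φ : ℝ → ℝ := fun t ↦ gaussianSmoothing F t (x + w) - gaussianSmoothing F t x
  have hderiv (t : ℝ) : HasDerivAt Φ
      (t * (gaussianSmoothing (Δ F) t (x + w) - gaussianSmoothing (Δ F) t x)) t :=
    ((hasDerivAt_gaussianSmoothing hC2 hlip (x + w) t).sub
      (hasDerivAt_gaussianSmoothing hC2 hlip x t)).congr_deriv (by ring)
  have hbound (t) (ht : t ∈ Set.Ico 0 s) :
      ‖t * (gaussianSmoothing (Δ F) t (x + w) - gaussianSmoothing (Δ F) t x)‖ ≤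
        s * (G * (1 + ‖x‖ + ‖w‖ + s * √(finrank ℝ E)) * ‖w‖) := by
    obtain ⟨ht0, hts⟩ := ht
    grw [norm_mul, Real.norm_of_nonneg ht0, Real.norm_eq_abs,
      abs_gaussianSmoothing_laplacian_sub_le hF hlip hG hΔ ht0]
    gcongr
  have h0 (y : E) : gaussianSmoothing F 0 y = F y := by simp [gaussianSmoothing]
  have h := norm_image_sub_le_of_norm_deriv_le_segment' (fun t _ ↦ (hderiv t).hasDerivWithinAt)
    hbound s (Set.right_mem_Icc.2 hs)
  simp only [Φ, h0, sub_zero, Real.norm_eq_abs] at h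
  rw [sub_sub_sub_comm]
  exact h.trans_eq (by ring)

theorem norm_integral_fderiv_add_smul_sub_le (hF : ContDiff ℝ 3 F)
    (hlip : LipschitzWith K (fderiv ℝ F)) {G : ℝ} (hG : 0 ≤ G)
    (hΔ : ∀ x, ‖fderiv ℝ (Δ F) x‖ ≤ G * (1 + ‖x‖)) {s : ℝ} (hs : 0 ≤ s) (x : E) :
    ‖(∫ z, fderiv ℝ F (x + s • z) ∂γ E) - fderiv ℝ F x‖ ≤
      G * (2 + ‖x‖ + s * √(finrank ℝ E)) * s ^ 2 := by
  have hC1 : ContDiff ℝ 1 F := hF.of_le (by norm_num)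
  -- The bias is the derivative of `gaussianSmoothing F s - F`, hence bounded by the local Lipschitz
  -- constant of that function: this way `F` is never differentiated more than three times.
  refine ((hasFDerivAt_gaussianSmoothing hC1 hlip s x).sub
    (hC1.differentiable (by simp) x).hasFDerivAt).le_of_lip' (by positivity) ?_
  filter_upwards [Metric.closedBall_mem_nhds x one_pos] with y hy
  have h := abs_gaussianSmoothing_sub_sub_le hF hlip hG hΔ hs x (y - x)
  rw [add_sub_cancel] at h
  have hy : 1 + ‖x‖ + ‖y - x‖ ≤ 2 + ‖x‖ := by linarith [mem_closedBall_iff_norm.1 hy]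
  grw [hy] at h
  exact h.trans_eq (mul_right_comm _ _ _)

theorem norm_integral_gradient_add_smul_sub_le (hF : ContDiff ℝ 3 F)
    (hlip : LipschitzWith K (gradient F)) {G : ℝ} (hG : 0 ≤ G)
    (hΔ : ∀ x, ‖gradient (Δ F) x‖ ≤ G * (1 + ‖x‖)) {s : ℝ} (hs : 0 ≤ s) (x : E) :
    ‖(∫ z, gradient F (x + s • z) ∂γ E) - gradient F x‖ ≤
      G * (2 + ‖x‖ + s * √(finrank ℝ E)) * s ^ 2 := by
  have hbias := norm_integral_fderiv_add_smul_sub_le hF (lipschitzWith_gradient_iff.1 hlip) hG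
    (fun x ↦ (norm_fderiv_eq_norm_gradient x).trans_le (hΔ x)) hs x
  let φ : StrongDual ℝ E ≃L[ℝ] E := (InnerProductSpace.toDual ℝ E).symm.toContinuousLinearEquiv
  have hcomm : ∫ z, gradient F (x + s • z) ∂γ E = φ (∫ z, fderiv ℝ F (x + s • z) ∂γ E) :=
    φ.integral_comp_comm _
  rw [← (InnerProductSpace.toDual ℝ E).symm.norm_map, map_sub] at hbias
  rwa [hcomm]

theorem stdGaussian_eq (d : ℕ) :
    _root_.stdGaussian d = ProbabilityTheory.stdGaussian (Euc d) := by
  rw [← map_pi_eq_stdGaussian]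
  rfl

end Gaussian

section PerturbedIntegralEquation

variable {E : Type*} [NormedAddCommGroup E] [NormedSpace ℝ E]

theorem norm_sub_le_of_eq_sub_integral {g : E → E} {K : ℝ≥0} (hg : LipschitzWith K g)
    (hg0 : g 0 = 0) {x y : ℝ → E} (hx : Continuous x) (hy : Continuous y) {h : ℝ} (hh : 0 ≤ h)
    (hKh : K * h ≤ 1 / 4) (hxy : ∀ s ∈ Set.Icc 0 h, x s = y s - ∫ r in (0 : ℝ)..s, g (x r))
    {s : ℝ} (hs : s ∈ Set.Icc 0 h) :
    ‖x s - y s‖ ≤ 4 / 3 * K * ∫ r in (0 : ℝ)..h, ‖y r‖ := by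
  obtain ⟨t, ht, hmax⟩ := isCompact_Icc.exists_isMaxOn (Set.nonempty_Icc.2 hh)
    (hx.sub hy).norm.continuousOn
  have hbound {r : ℝ} (hr : r ∈ Set.Icc 0 h) : ‖g (x r)‖ ≤ K * (‖x t - y t‖ + ‖y r‖) := by
    have hlip := hg.norm_sub_le (x r) 0
    rw [hg0, sub_zero, sub_zero] at hlip
    refine hlip.trans ?_
    gcongr
    exact (norm_le_norm_sub_add (x r) (y r)).trans (add_le_add_left (hmax hr) _)
  have hmain : ‖x t - y t‖ ≤ K * (h * ‖x t - y t‖ + ∫ r in (0 : ℝ)..h, ‖y r‖) := by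
    calc ‖x t - y t‖ = ‖∫ r in (0 : ℝ)..t, g (x r)‖ := by
          rw [← norm_neg]
          nth_rw 1 [hxy t ht]
          rw [sub_sub_cancel_left, neg_neg]
      _ ≤ ∫ r in (0 : ℝ)..t, K * (‖x t - y t‖ + ‖y r‖) :=
          intervalIntegral.norm_integral_le_of_norm_le ht.1
            (.of_forall fun r hr ↦ hbound ⟨hr.1.le, hr.2.trans ht.2⟩)
            ((by fun_prop : Continuous _).intervalIntegrable ..)
      _ ≤ ∫ r in (0 : ℝ)..h, K * (‖x t - y t‖ + ‖y r‖) :=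
          intervalIntegral.integral_mono_interval le_rfl ht.1 ht.2
            (.of_forall fun r ↦ by positivity) ((by fun_prop : Continuous _).intervalIntegrable ..)
      _ = K * (h * ‖x t - y t‖ + ∫ r in (0 : ℝ)..h, ‖y r‖) := by
          rw [intervalIntegral.integral_const_mul, intervalIntegral.integral_add (by simp)
            (hy.norm.intervalIntegrable ..)]
          simp
  have hst : ‖x s - y s‖ ≤ ‖x t - y t‖ := hmax hs
  nlinarith [norm_nonneg (x t - y t)]

end PerturbedIntegralEquation

section SquareIntegrable

variable {E Ω : Type*} [NormedAddCommGroup E] {mΩ : MeasurableSpace Ω} {P : Measure Ω}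
  {U V : Ω → E}

theorem norm_toLp_eq_lpNorm {p : ℝ≥0∞} (hU : MemLp U p P) : ‖hU.toLp U‖ = lpNorm U p P := by
  rw [Lp.norm_toLp, toReal_eLpNorm hU.1]

theorem memLp_comp_sub_comp {g : E → E} {K : ℝ≥0} (hg : LipschitzWith K g) {p : ℝ≥0∞}
    (hU : MemLp U p P) (hV : MemLp V p P) :
    MemLp (fun ω ↦ g (U ω) - g (V ω)) p P := by
  refine (hU.sub hV).of_le_mul ((hg.continuous.comp_aestronglyMeasurable hU.1).sub
    (hg.continuous.comp_aestronglyMeasurable hV.1)) (.of_forall fun ω ↦ hg.norm_sub_le _ _)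

theorem lpNorm_comp_sub_comp_le {g : E → E} {K : ℝ≥0} (hg : LipschitzWith K g) {p : ℝ≥0∞}
    (hU : MemLp U p P) (hV : MemLp V p P) :
    lpNorm (fun ω ↦ g (U ω) - g (V ω)) p P ≤ K * lpNorm (U - V) p P := by
  have hbound := lpNorm_mono_real ((hU.sub hV).norm.const_mul K) fun ω ↦ hg.norm_sub_le (U ω) (V ω)
  exact hbound.trans_eq (by
    rw [← lpNorm_norm (hU.sub hV).1]
    exact (lpNorm_const_smul (K : ℝ) _ P).trans (by simp))

theorem lintegral_nnnorm_sq_rpow_half_eq (hU : MemLp U 2 P) :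
    (∫⁻ ω, (‖U ω‖₊ : ℝ≥0∞) ^ 2 ∂P) ^ (1 / 2 : ℝ) = ENNReal.ofReal (lpNorm U 2 P) := by
  rw [ofReal_lpNorm hU, eLpNorm_eq_lintegral_rpow_enorm_toReal two_ne_zero ENNReal.ofNat_ne_top]
  simp only [ENNReal.toReal_ofNat, ENNReal.rpow_ofNat]
  rfl

variable [InnerProductSpace ℝ E]

theorem integral_inner_eq_inner_toLp (hU : MemLp U 2 P) (hV : MemLp V 2 P) :
    ∫ ω, inner ℝ (U ω) (V ω) ∂P = inner ℝ (hU.toLp U) (hV.toLp V) := by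
  rw [L2.inner_def]
  refine integral_congr_ae ?_
  filter_upwards [hU.coeFn_toLp, hV.coeFn_toLp] with ω hUω hVω
  rw [hUω, hVω]

theorem integrable_inner_of_memLp (hU : MemLp U 2 P) (hV : MemLp V 2 P) :
    Integrable (fun ω ↦ inner ℝ (U ω) (V ω)) P := by
  refine (L2.integrable_inner (𝕜 := ℝ) (hU.toLp U) (hV.toLp V)).congr ?_
  filter_upwards [hU.coeFn_toLp, hV.coeFn_toLp] with ω hUω hVω
  rw [hUω, hVω]

theorem abs_integral_inner_le_lpNorm_mul_lpNorm (hU : MemLp U 2 P) (hV : MemLp V 2 P) :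
    |∫ ω, inner ℝ (U ω) (V ω) ∂P| ≤ lpNorm U 2 P * lpNorm V 2 P := by
  rw [integral_inner_eq_inner_toLp hU hV, ← norm_toLp_eq_lpNorm hU, ← norm_toLp_eq_lpNorm hV]
  exact abs_real_inner_le_norm _ _

theorem lpNorm_two_sq (hU : MemLp U 2 P) : lpNorm U 2 P ^ 2 = ∫ ω, ‖U ω‖ ^ 2 ∂P := by
  rw [← norm_toLp_eq_lpNorm hU, ← real_inner_self_eq_norm_sq, ← integral_inner_eq_inner_toLp]
  simp only [real_inner_self_eq_norm_sq]

theorem lpNorm_add_two_sq (hU : MemLp U 2 P) (hV : MemLp V 2 P) :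
    lpNorm (U + V) 2 P ^ 2 =
      lpNorm U 2 P ^ 2 + 2 * (∫ ω, inner ℝ (U ω) (V ω) ∂P) + lpNorm V 2 P ^ 2 := by
  rw [integral_inner_eq_inner_toLp hU hV, ← norm_toLp_eq_lpNorm (hU.add hV),
    ← norm_toLp_eq_lpNorm hU, ← norm_toLp_eq_lpNorm hV, MemLp.toLp_add, norm_add_sq_real]

omit [InnerProductSpace ℝ E] in
theorem integral_norm_mul_norm_le_lpNorm_mul_lpNorm {E' : Type*} [NormedAddCommGroup E']
    {V : Ω → E'} (hU : MemLp U 2 P) (hV : MemLp V 2 P) :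
    ∫ ω, ‖U ω‖ * ‖V ω‖ ∂P ≤ lpNorm U 2 P * lpNorm V 2 P := by
  have h := abs_integral_inner_le_lpNorm_mul_lpNorm hV.norm hU.norm
  rw [lpNorm_norm hU.1, lpNorm_norm hV.1, mul_comm (lpNorm V 2 P)] at h
  exact (le_abs_self _).trans h

end SquareIntegrable

section MinkowskiIntegral

variable {E Ω α : Type*} [NormedAddCommGroup E] {mΩ : MeasurableSpace Ω} {mα : MeasurableSpace α}
  {P : Measure Ω}

theorem eLpNorm'_integral_le [NormedSpace ℝ E] {ν : Measure α} [IsFiniteMeasure ν] [SFinite P]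
    {F : α → Ω → E} (hF : StronglyMeasurable (Function.uncurry F)) {p : ℝ} (hp : 1 ≤ p)
    {C : ℝ≥0∞} (hC : ∀ᵐ a ∂ν, eLpNorm' (F a) p P ≤ C) :
    eLpNorm' (fun ω ↦ ∫ a, F a ω ∂ν) p P ≤ ν Set.univ * C := by
  have hp0 : 0 < p := by positivity
  have hjensen (ω : Ω) : ‖∫ a, F a ω ∂ν‖ₑ ^ p ≤
      ν Set.univ ^ (p - 1) * ∫⁻ a, ‖F a ω‖ₑ ^ p ∂ν := by
    have h := eLpNorm'_le_eLpNorm'_mul_rpow_measure_univ one_pos hp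
      (hF.comp_measurable (measurable_prodMk_right (y := ω))).aestronglyMeasurable (μ := ν)
    calc ‖∫ a, F a ω ∂ν‖ₑ ^ p ≤ (∫⁻ a, ‖F a ω‖ₑ ∂ν) ^ p := by
          gcongr; exact enorm_integral_le_lintegral_enorm _
      _ ≤ ((∫⁻ a, ‖F a ω‖ₑ ^ p ∂ν) ^ (1 / p) * ν Set.univ ^ (1 - 1 / p)) ^ p := by
          gcongr; simpa [eLpNorm'] using h
      _ = ν Set.univ ^ (p - 1) * ∫⁻ a, ‖F a ω‖ₑ ^ p ∂ν := by
          rw [ENNReal.mul_rpow_of_nonneg _ _ hp0.le, ← ENNReal.rpow_mul, ← ENNReal.rpow_mul,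
            one_div_mul_cancel hp0.ne', ENNReal.rpow_one, mul_comm, sub_mul,
            one_div_mul_cancel hp0.ne', one_mul]
  have hmeas : Measurable fun q : α × Ω ↦ ‖F q.1 q.2‖ₑ ^ p := hF.enorm.pow_const p
  rw [← ENNReal.rpow_le_rpow_iff hp0, ← lintegral_rpow_enorm_eq_rpow_eLpNorm' hp0]
  calc ∫⁻ ω, ‖∫ a, F a ω ∂ν‖ₑ ^ p ∂P
      ≤ ∫⁻ ω, ν Set.univ ^ (p - 1) * ∫⁻ a, ‖F a ω‖ₑ ^ p ∂ν ∂P := lintegral_mono hjensen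
    _ = ν Set.univ ^ (p - 1) * ∫⁻ a, eLpNorm' (F a) p P ^ p ∂ν := by
        simp_rw [← lintegral_rpow_enorm_eq_rpow_eLpNorm' hp0]
        rw [lintegral_const_mul _ hmeas.lintegral_prod_left',
          lintegral_lintegral_swap (f := fun a ω ↦ ‖F a ω‖ₑ ^ p) hmeas.aemeasurable]
    _ ≤ ν Set.univ ^ (p - 1) * ∫⁻ _, C ^ p ∂ν := by
        gcongr 1
        exact lintegral_mono_ae (hC.mono fun a ha ↦ by gcongr)
    _ = (ν Set.univ * C) ^ p := by
        rw [lintegral_const, mul_left_comm, mul_comm, ENNReal.mul_rpow_of_nonneg _ _ hp0.le]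
        congr 1
        conv_lhs => enter [2]; rw [← ENNReal.rpow_one (ν Set.univ)]
        rw [← ENNReal.rpow_add_of_nonneg _ _ (by linarith) zero_le_one, sub_add_cancel]

end MinkowskiIntegral

section RandomIntervalIntegral

variable {E Ω : Type*} [NormedAddCommGroup E] {mΩ : MeasurableSpace Ω} {P : Measure Ω} [SFinite P]
  {F : ℝ → Ω → E} {h C : ℝ}

theorem memLp_intervalIntegral_and_lpNorm_le [NormedSpace ℝ E]
    (hF : StronglyMeasurable (Function.uncurry F)) (hh : 0 < h)
    (hmem : ∀ r ∈ Set.Ioc 0 h, MemLp (F r) 2 P)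
    (hC : ∀ r ∈ Set.Ioc 0 h, lpNorm (F r) 2 P ≤ C) :
    MemLp (fun ω ↦ ∫ r in (0 : ℝ)..h, F r ω) 2 P ∧
      lpNorm (fun ω ↦ ∫ r in (0 : ℝ)..h, F r ω) 2 P ≤ h * C := by
  simp only [intervalIntegral.integral_of_le hh.le]
  have hmeas : AEStronglyMeasurable (fun ω ↦ ∫ r in Set.Ioc 0 h, F r ω) P :=
    (hF.integral_prod_left (μ := volume.restrict (Set.Ioc 0 h))).aestronglyMeasurable
  have hbound (r : ℝ) (hr : r ∈ Set.Ioc 0 h) : eLpNorm (F r) 2 P ≤ ENNReal.ofReal C := by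
    rw [← ofReal_lpNorm (hmem r hr)]
    exact ENNReal.ofReal_le_ofReal (hC r hr)
  have hle : eLpNorm (fun ω ↦ ∫ r in Set.Ioc 0 h, F r ω) 2 P ≤ ENNReal.ofReal (h * C) := by
    have h2 (U : Ω → E) : eLpNorm U 2 P = eLpNorm' U 2 P :=
      eLpNorm_eq_eLpNorm' two_ne_zero ENNReal.ofNat_ne_top
    simp only [h2] at hbound ⊢
    have := eLpNorm'_integral_le (ν := volume.restrict (Set.Ioc 0 h)) hF one_le_two
      (ae_restrict_of_forall_mem measurableSet_Ioc hbound)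
    rwa [Measure.restrict_apply_univ, Real.volume_Ioc, sub_zero, ← ENNReal.ofReal_mul hh.le] at this
  have hC0 : 0 ≤ C := lpNorm_nonneg.trans (hC h (Set.right_mem_Ioc.2 hh))
  rw [← toReal_eLpNorm hmeas]
  exact ⟨⟨hmeas, hle.trans_lt ENNReal.ofReal_lt_top⟩,
    ENNReal.toReal_le_of_le_ofReal (by positivity) hle⟩

variable [InnerProductSpace ℝ E] [CompleteSpace E]

theorem abs_integral_inner_intervalIntegral_le (hF : StronglyMeasurable (Function.uncurry F))
    (hcont : ∀ ω, Continuous fun r ↦ F r ω) (hh : 0 ≤ h) {A : Ω → E} (hA : MemLp A 2 P)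
    (hmem : ∀ r ∈ Set.Ioc 0 h, MemLp (F r) 2 P) (hC : ∀ r ∈ Set.Ioc 0 h, lpNorm (F r) 2 P ≤ C)
    {c : ℝ} (hc : ∀ r ∈ Set.Ioc 0 h, |∫ ω, inner ℝ (A ω) (F r ω) ∂P| ≤ c) :
    |∫ ω, inner ℝ (A ω) (∫ r in (0 : ℝ)..h, F r ω) ∂P| ≤ h * c := by
  have hprod : Integrable (fun q : ℝ × Ω ↦ inner ℝ (A q.2) (F q.1 q.2))
      ((volume.restrict (Set.Ioc 0 h)).prod P) := by
    have hmeas := hA.1.comp_snd.inner (𝕜 := ℝ) hF.aestronglyMeasurable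
      (μ := (volume.restrict (Set.Ioc 0 h)).prod P)
    refine (integrable_prod_iff hmeas).2 ⟨ae_restrict_of_forall_mem measurableSet_Ioc fun r hr ↦
      integrable_inner_of_memLp hA (hmem r hr), ?_⟩
    refine Integrable.mono' (integrable_const (lpNorm A 2 P * C))
      hmeas.norm.integral_prod_right' (ae_restrict_of_forall_mem measurableSet_Ioc fun r hr ↦ ?_)
    rw [Real.norm_of_nonneg (integral_nonneg fun _ ↦ norm_nonneg _)]
    calc ∫ ω, ‖inner ℝ (A ω) (F r ω)‖ ∂P ≤ ∫ ω, ‖A ω‖ * ‖F r ω‖ ∂P :=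
          integral_mono (integrable_inner_of_memLp hA (hmem r hr)).norm
            (hA.norm.integrable_mul (hmem r hr).norm) fun ω ↦ norm_inner_le_norm _ _
      _ ≤ lpNorm A 2 P * lpNorm (F r) 2 P :=
          integral_norm_mul_norm_le_lpNorm_mul_lpNorm hA (hmem r hr)
      _ ≤ lpNorm A 2 P * C := by gcongr; exacts [lpNorm_nonneg, hC r hr]
  have hswap : ∫ ω, inner ℝ (A ω) (∫ r in (0 : ℝ)..h, F r ω) ∂P =
      ∫ r in (0 : ℝ)..h, ∫ ω, inner ℝ (A ω) (F r ω) ∂P := by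
    rw [intervalIntegral.integral_of_le hh, integral_integral_swap hprod]
    refine integral_congr_ae (.of_forall fun ω ↦ ?_)
    simp only
    rw [intervalIntegral.integral_of_le hh, integral_inner]
    exact ((hcont ω).intervalIntegrable 0 h).1
  rw [hswap, ← Real.norm_eq_abs, mul_comm]
  refine (intervalIntegral.norm_integral_le_of_norm_le_const (C := c) fun r hr ↦ ?_).trans_eq ?_
  · rw [Set.uIoc_of_le hh] at hr
    exact hc r hr
  · rw [sub_zero, abs_of_nonneg hh]

end RandomIntervalIntegral

/-- The increment `√2 (B_{t+s} - B_t)` of the stochastic forcing in the Langevin equation. -/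
noncomputable def langevinNoise {d : ℕ} {Ω : Type*} (B : ℝ → Ω → Euc d) (t s : ℝ) (ω : Ω) :
    Euc d :=
  √2 • (B (t + s) ω - B t ω)

/-- Evaluating `g` at a point perturbed by a centred Gaussian of covariance `s² I` shifts its mean
by `O(s²)`, at a rate growing linearly in the point. -/
def HasGaussianBias {d : ℕ} (G : ℝ) (g : Euc d → Euc d) : Prop :=
  ∀ s, 0 ≤ s → ∀ x, ‖(∫ z, g (x + s • z) ∂ProbabilityTheory.stdGaussian (Euc d)) - g x‖ ≤
    G * (2 + ‖x‖ + s * √d) * s ^ 2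

theorem HasGaussianBias.abs_integral_inner_le {d : ℕ} {G : ℝ} {g : Euc d → Euc d}
    (hbias : HasGaussianBias G g) {K : ℝ≥0} (hg : LipschitzWith K g) {s : ℝ} (hs : 0 ≤ s)
    (a x : Euc d) :
    |∫ z, inner ℝ a (g (x + s • z) - g x) ∂ProbabilityTheory.stdGaussian (Euc d)| ≤
      ‖a‖ * (G * (2 + ‖x‖ + s * √d) * s ^ 2) := by
  have hint : Integrable (fun z ↦ g (x + s • z) - g x) (ProbabilityTheory.stdGaussian (Euc d)) :=
    memLp_one_iff_integrable.1 <| memLp_comp_sub_comp hg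
      ((memLp_const x).add ((IsGaussian.memLp_id _ 1 (by simp)).const_smul s)) (memLp_const x)
  have hint' : Integrable (fun z ↦ g (x + s • z)) (ProbabilityTheory.stdGaussian (Euc d)) :=
    (hint.add (integrable_const (g x))).congr (.of_forall fun z ↦ sub_add_cancel _ _)
  rw [integral_inner hint, integral_sub hint' (integrable_const _), integral_const, probReal_univ,
    one_smul]
  exact (abs_real_inner_le_norm _ _).trans (by gcongr; exact hbias s hs x)

namespace IsStdBrownian

variable {d : ℕ} {Ω : Type*} {mΩ : MeasurableSpace Ω} {P : Measure Ω} {ℱ : Filtration ℝ mΩ}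
  {B : ℝ → Ω → Euc d} {t s : ℝ}

theorem measurable (hB : IsStdBrownian P ℱ B) (t : ℝ) : Measurable (B t) :=
  ((hB.adapted t).mono (ℱ.le t)).measurable

theorem measurable_langevinNoise (hB : IsStdBrownian P ℱ B) (t s : ℝ) :
    Measurable (langevinNoise B t s) :=
  ((hB.measurable _).sub (hB.measurable _)).const_smul √2

theorem continuous_langevinNoise (hB : IsStdBrownian P ℱ B) (t : ℝ) (ω : Ω) :
    Continuous fun s ↦ langevinNoise B t s ω :=
  (((hB.cont ω).comp (continuous_const_add t)).sub continuous_const).const_smul √2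

theorem map_langevinNoise (hB : IsStdBrownian P ℱ B) (ht : 0 ≤ t) (hs : 0 ≤ s) :
    P.map (langevinNoise B t s) =
      (ProbabilityTheory.stdGaussian (Euc d)).map (√(2 * s) • ·) := by
  have hlaw := hB.incr_law t (t + s) ht (by linarith)
  rw [add_sub_cancel_left, isoGaussian, stdGaussian_eq] at hlaw
  calc P.map (langevinNoise B t s) = (P.map fun ω ↦ B (t + s) ω - B t ω).map (√2 • ·) :=
        (Measure.map_map (by fun_prop) ((hB.measurable _).sub (hB.measurable _))).symm
    _ = (ProbabilityTheory.stdGaussian (Euc d)).map (√(2 * s) • ·) := by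
        rw [hlaw, Measure.map_map (by fun_prop) (by fun_prop), Real.sqrt_mul zero_le_two]
        simp only [Function.comp_def, smul_smul]

theorem indepFun_langevinNoise (hB : IsStdBrownian P ℱ B) (ht : 0 ≤ t) (hs : 0 ≤ s) {α : Type*}
    [MeasurableSpace α] {p : Ω → α} (hp : Measurable[ℱ t] p) :
    IndepFun p (langevinNoise B t s) P := by
  have hind := (hB.incr_indep t (t + s) ht (by linarith)).symm
  have hind' : IndepFun p (fun ω ↦ B (t + s) ω - B t ω) P :=
    (IndepFun_iff_Indep ..).2 (indep_of_indep_of_le_left hind hp.comap_le)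
  exact hind'.comp (φ := id) measurable_id (measurable_const_smul (√2 : ℝ))

theorem memLp_langevinNoise (hB : IsStdBrownian P ℱ B) (ht : 0 ≤ t) (hs : 0 ≤ s) :
    MemLp (langevinNoise B t s) 2 P := by
  have hW := hB.measurable_langevinNoise t s
  have h := memLp_map_measure_iff (p := 2) (g := (id : Euc d → Euc d)) (by fun_prop)
    (hW.aemeasurable (μ := P))
  rw [hB.map_langevinNoise ht hs, memLp_map_measure_iff (by fun_prop) (by fun_prop)] at h
  exact h.1 (IsGaussian.memLp_two_id.const_smul √(2 * s))

theorem lpNorm_langevinNoise (hB : IsStdBrownian P ℱ B) (ht : 0 ≤ t) (hs : 0 ≤ s) :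
    lpNorm (langevinNoise B t s) 2 P = √(2 * d * s) := by
  rw [eq_comm, Real.sqrt_eq_iff_mul_self_eq (by positivity) lpNorm_nonneg, ← sq,
    lpNorm_two_sq (hB.memLp_langevinNoise ht hs),
    ← integral_map (hB.measurable_langevinNoise t s).aemeasurable
      (f := fun x ↦ ‖x‖ ^ 2) (by fun_prop),
    hB.map_langevinNoise ht hs, integral_map (by fun_prop) (by fun_prop)]
  simp only [norm_smul, mul_pow, integral_const_mul, integral_norm_sq_stdGaussian,
    finrank_euclideanSpace_fin, Real.norm_of_nonneg (Real.sqrt_nonneg _)]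
  rw [Real.sq_sqrt (by positivity)]
  ring

variable [IsProbabilityMeasure P]

theorem integral_comp_langevinNoise (hB : IsStdBrownian P ℱ B) (ht : 0 ≤ t) (hs : 0 ≤ s)
    {α : Type*} [MeasurableSpace α] {p : Ω → α} (hp : Measurable[ℱ t] p) {Φ : α × Euc d → ℝ}
    (hΦ : StronglyMeasurable Φ)
    (hint : Integrable (fun ω ↦ Φ (p ω, langevinNoise B t s ω)) P) :
    ∫ ω, Φ (p ω, langevinNoise B t s ω) ∂P =
      ∫ ω, ∫ z, Φ (p ω, √(2 * s) • z) ∂ProbabilityTheory.stdGaussian (Euc d) ∂P := by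
  have hp' : Measurable p := hp.mono (ℱ.le t) le_rfl
  have hW := hB.measurable_langevinNoise t s
  have hpW := (hp'.prodMk hW).aemeasurable (μ := P)
  have hlaw := (indepFun_iff_map_prod_eq_prod_map_map hp'.aemeasurable hW.aemeasurable).1
    (hB.indepFun_langevinNoise ht hs hp)
  have : IsProbabilityMeasure (P.map p) := Measure.isProbabilityMeasure_map hp'.aemeasurable
  have hint' : Integrable Φ (P.map fun ω ↦ (p ω, langevinNoise B t s ω)) :=
    (integrable_map_measure hΦ.aestronglyMeasurable hpW).2 hint
  rw [hlaw, hB.map_langevinNoise ht hs] at hint'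
  rw [← integral_map hpW hΦ.aestronglyMeasurable, hlaw, hB.map_langevinNoise ht hs,
    integral_prod _ hint', integral_map hp'.aemeasurable
      hΦ.integral_prod_right'.aestronglyMeasurable]
  refine integral_congr_ae (.of_forall fun ω ↦ integral_map (by fun_prop) ?_)
  exact (hΦ.comp_measurable measurable_prodMk_left).aestronglyMeasurable

theorem integral_inner_langevinNoise (hB : IsStdBrownian P ℱ B) (ht : 0 ≤ t) (hs : 0 ≤ s)
    {A : Ω → Euc d} (hA : StronglyMeasurable[ℱ t] A) (hA2 : MemLp A 2 P) :
    ∫ ω, inner ℝ (A ω) (langevinNoise B t s ω) ∂P = 0 := by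
  rw [hB.integral_comp_langevinNoise ht hs hA.measurable (Φ := fun q ↦ inner ℝ q.1 q.2)
    (by fun_prop) (integrable_inner_of_memLp hA2 (hB.memLp_langevinNoise ht hs))]
  have hcentred (x : Euc d) :
      ∫ z, inner ℝ x z ∂ProbabilityTheory.stdGaussian (Euc d) = 0 :=
    integral_strongDual_stdGaussian (innerSL ℝ x)
  simp only [inner_smul_right, integral_const_mul, hcentred, mul_zero, integral_zero]

theorem lpNorm_add_langevinNoise_sq (hB : IsStdBrownian P ℱ B) (ht : 0 ≤ t) (hs : 0 ≤ s)
    {A : Ω → Euc d} (hA : StronglyMeasurable[ℱ t] A) (hA2 : MemLp A 2 P) :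
    lpNorm (A + langevinNoise B t s) 2 P ^ 2 = lpNorm A 2 P ^ 2 + 2 * d * s := by
  rw [lpNorm_add_two_sq hA2 (hB.memLp_langevinNoise ht hs),
    hB.integral_inner_langevinNoise ht hs hA hA2, hB.lpNorm_langevinNoise ht hs,
    Real.sq_sqrt (by positivity), mul_zero, add_zero]

theorem abs_integral_inner_sub_le_of_hasGaussianBias (hB : IsStdBrownian P ℱ B) (ht : 0 ≤ t)
    (hs : 0 ≤ s) {g : Euc d → Euc d} {K : ℝ≥0} (hg : LipschitzWith K g) {G : ℝ} (hG : 0 ≤ G)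
    (hbias : HasGaussianBias G g) {A Y : Ω → Euc d} (hA : StronglyMeasurable[ℱ t] A)
    (hA2 : MemLp A 2 P) (hY : StronglyMeasurable[ℱ t] Y) (hY2 : MemLp Y 2 P) :
    |∫ ω, inner ℝ (A ω) (g (Y ω + langevinNoise B t s ω) - g (Y ω)) ∂P| ≤
      lpNorm A 2 P * (2 * G * s * (2 + lpNorm Y 2 P + √(2 * d * s))) := by
  have hmem := memLp_comp_sub_comp hg (hY2.add (hB.memLp_langevinNoise ht hs)) hY2
  have hgc := hg.continuous
  let β : Ω → ℝ := fun ω ↦ 2 * G * s * (‖Y ω‖ + (2 + √(2 * d * s)))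
  have hβ : MemLp β 2 P := (hY2.norm.add (memLp_const _)).const_mul _
  have hβ_le : lpNorm β 2 P ≤ 2 * G * s * (2 + lpNorm Y 2 P + √(2 * d * s)) := by
    have hsum : lpNorm ((fun ω ↦ ‖Y ω‖) + fun _ ↦ 2 + √(2 * d * s)) 2 P ≤
        lpNorm Y 2 P + (2 + √(2 * d * s)) := by
      refine (lpNorm_add_le hY2.norm one_le_two).trans_eq ?_
      rw [lpNorm_norm hY2.1, lpNorm_const two_ne_zero (NeZero.ne P), probReal_univ,
        Real.one_rpow, mul_one, Real.norm_of_nonneg (by positivity)]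
    refine (lpNorm_const_smul (2 * G * s) _ P).trans_le ?_
    rw [coe_nnnorm, Real.norm_of_nonneg (by positivity)]
    gcongr
    exact hsum.trans_eq (by ring)
  have hpoint (ω : Ω) : ‖∫ z, inner ℝ (A ω) (g (Y ω + √(2 * s) • z) - g (Y ω))
      ∂ProbabilityTheory.stdGaussian (Euc d)‖ ≤ ‖A ω‖ * ‖β ω‖ := by
    refine (hbias.abs_integral_inner_le hg (Real.sqrt_nonneg _) _ _).trans_eq ?_
    rw [Real.norm_of_nonneg (by positivity), Real.sq_sqrt (by positivity),
      ← Real.sqrt_mul' _ (by positivity), mul_right_comm 2]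
    ring
  rw [hB.integral_comp_langevinNoise ht hs (p := fun ω ↦ (A ω, Y ω))
    (hA.measurable.prodMk hY.measurable)
    (Φ := fun q ↦ inner ℝ q.1.1 (g (q.1.2 + q.2) - g q.1.2))
    (by fun_prop : Continuous _).stronglyMeasurable (integrable_inner_of_memLp hA2 hmem)]
  calc |∫ ω, ∫ z, inner ℝ (A ω) (g (Y ω + √(2 * s) • z) - g (Y ω))
        ∂ProbabilityTheory.stdGaussian (Euc d) ∂P|
      ≤ ∫ ω, ‖A ω‖ * ‖β ω‖ ∂P :=
        norm_integral_le_of_norm_le (hA2.norm.integrable_mul hβ.norm) (.of_forall hpoint)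
    _ ≤ lpNorm A 2 P * lpNorm β 2 P := integral_norm_mul_norm_le_lpNorm_mul_lpNorm hA2 hβ
    _ ≤ lpNorm A 2 P * (2 * G * s * (2 + lpNorm Y 2 P + √(2 * d * s))) := by
        gcongr
        exact lpNorm_nonneg

end IsStdBrownian

section LocalError

variable {d : ℕ} {Ω : Type*} {mΩ : MeasurableSpace Ω} {P : Measure Ω} {ℱ : Filtration ℝ mΩ}
  {f : Euc d → ℝ} {B X : ℝ → Ω → Euc d} {h t s : ℝ} {K : ℝ≥0}

/-- The path that follows the process `X` until time `t` and only the noise, without drift, for the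
further time `s`. -/
noncomputable def driftlessPath (B X : ℝ → Ω → Euc d) (t s : ℝ) : Ω → Euc d :=
  X t + langevinNoise B t s

/-- The part of the one-step error caused by the effect of the drift on the path inside the
step. -/
noncomputable def feedbackError (f : Euc d → ℝ) (B X : ℝ → Ω → Euc d) (h t : ℝ) (ω : Ω) : Euc d :=
  ∫ r in (0 : ℝ)..h, (gradient f (X (t + r) ω) - gradient f (driftlessPath B X t r ω))

/-- The part of the one-step error caused by the effect of the noise on the drift inside the
step. -/
noncomputable def noiseError (f : Euc d → ℝ) (B X : ℝ → Ω → Euc d) (h t : ℝ) (ω : Ω) : Euc d :=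
  ∫ r in (0 : ℝ)..h, (gradient f (driftlessPath B X t r ω) - gradient f (X t ω))

/-- The one-step error of the explicit Euler scheme for the Langevin equation: the difference
between the solution at time `t + h` and a step of size `h` from the solution at time `t`. -/
noncomputable def localError (f : Euc d → ℝ) (B X : ℝ → Ω → Euc d) (h t : ℝ) (ω : Ω) : Euc d :=
  X (t + h) ω - (gradientStep f h (X t ω) + langevinNoise B t h ω)

namespace IsStdBrownian

theorem continuous_driftlessPath (hB : IsStdBrownian P ℱ B) (t : ℝ) (ω : Ω) :
    Continuous fun r ↦ driftlessPath B X t r ω :=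
  continuous_const.add (hB.continuous_langevinNoise t ω)

theorem memLp_driftlessPath (hB : IsStdBrownian P ℱ B) (ht : 0 ≤ t) (hs : 0 ≤ s)
    (hXt : MemLp (X t) 2 P) : MemLp (driftlessPath B X t s) 2 P :=
  hXt.add (hB.memLp_langevinNoise ht hs)

theorem lpNorm_driftlessPath_le (hB : IsStdBrownian P ℱ B) (ht : 0 ≤ t)
    (hs : s ∈ Set.Ioc 0 h) (hXt : MemLp (X t) 2 P) :
    lpNorm (driftlessPath B X t s) 2 P ≤ lpNorm (X t) 2 P + √(2 * d * h) := by
  refine (lpNorm_add_le hXt one_le_two).trans ?_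
  rw [hB.lpNorm_langevinNoise ht hs.1.le]
  gcongr
  exact hs.2

theorem memLp_gradient_driftlessPath_sub (hB : IsStdBrownian P ℱ B)
    (hg : LipschitzWith K (gradient f)) (ht : 0 ≤ t) (hXt : MemLp (X t) 2 P)
    (hs : 0 ≤ s) :
    MemLp (fun ω ↦ gradient f (driftlessPath B X t s ω) - gradient f (X t ω)) 2 P :=
  memLp_comp_sub_comp hg (hB.memLp_driftlessPath ht hs hXt) hXt

theorem lpNorm_gradient_driftlessPath_sub_le (hB : IsStdBrownian P ℱ B)
    (hg : LipschitzWith K (gradient f)) (ht : 0 ≤ t) (hXt : MemLp (X t) 2 P)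
    (hs : s ∈ Set.Ioc 0 h) :
    lpNorm (fun ω ↦ gradient f (driftlessPath B X t s ω) - gradient f (X t ω)) 2 P ≤
      K * √(2 * d * h) := by
  refine (lpNorm_comp_sub_comp_le hg (hB.memLp_driftlessPath ht hs.1.le hXt) hXt).trans ?_
  rw [driftlessPath, add_sub_cancel_left, hB.lpNorm_langevinNoise ht hs.1.le]
  gcongr
  exact hs.2

end IsStdBrownian

namespace IsLangevinSolution

theorem stronglyMeasurable (hX : IsLangevinSolution ℱ f B X) (t : ℝ) : StronglyMeasurable (X t) :=
  (hX.adapted t).mono (ℱ.le t)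

theorem continuous_add (hX : IsLangevinSolution ℱ f B X) (t : ℝ) (ω : Ω) :
    Continuous fun r ↦ X (t + r) ω :=
  (hX.cont ω).comp (continuous_const_add t)

theorem stronglyMeasurable_driftlessPath (hX : IsLangevinSolution ℱ f B X)
    (hB : IsStdBrownian P ℱ B) (t s : ℝ) : StronglyMeasurable (driftlessPath B X t s) :=
  (hX.stronglyMeasurable t).add (hB.measurable_langevinNoise t s).stronglyMeasurable

theorem eq_driftlessPath_sub_integral (hX : IsLangevinSolution ℱ f B X)
    (hg : Continuous (gradient f)) (ht : 0 ≤ t) (hs : 0 ≤ s) (ω : Ω) :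
    X (t + s) ω = driftlessPath B X t s ω - ∫ r in (0 : ℝ)..s, gradient f (X (t + r) ω) := by
  have hint (a b : ℝ) : IntervalIntegrable (fun r ↦ gradient f (X r ω)) volume a b :=
    (hg.comp (hX.cont ω)).intervalIntegrable a b
  have hsplit := intervalIntegral.integral_add_adjacent_intervals (hint 0 t) (hint t (t + s))
  rw [intervalIntegral.integral_comp_add_left (fun r ↦ gradient f (X r ω)), add_zero,
    hX.eqn ω (t + s) (add_nonneg ht hs), driftlessPath, Pi.add_apply, hX.eqn ω t ht, ← hsplit,
    langevinNoise, smul_sub]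
  abel

theorem localError_eq (hX : IsLangevinSolution ℱ f B X) (hB : IsStdBrownian P ℱ B)
    (hg : Continuous (gradient f)) (ht : 0 ≤ t) (hh : 0 ≤ h) :
    localError f B X h t = -(feedbackError f B X h t + noiseError f B X h t) := by
  funext ω
  have hXint : IntervalIntegrable (fun r ↦ gradient f (X (t + r) ω)) volume 0 h :=
    (hg.comp (hX.continuous_add t ω)).intervalIntegrable 0 h
  have hYint : IntervalIntegrable (fun r ↦ gradient f (driftlessPath B X t r ω)) volume 0 h :=
    (hg.comp (hB.continuous_driftlessPath t ω)).intervalIntegrable 0 h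
  rw [localError, hX.eq_driftlessPath_sub_integral hg ht hh, Pi.neg_apply, Pi.add_apply,
    feedbackError, noiseError, intervalIntegral.integral_sub hXint hYint,
    intervalIntegral.integral_sub hYint intervalIntegrable_const,
    intervalIntegral.integral_const, sub_zero, driftlessPath, Pi.add_apply, gradientStep]
  abel

theorem stronglyMeasurable_uncurry_gradient_driftlessPath_sub (hX : IsLangevinSolution ℱ f B X)
    (hB : IsStdBrownian P ℱ B) (hg : Continuous (gradient f)) (t : ℝ) :
    StronglyMeasurable (Function.uncurry
      fun r ω ↦ gradient f (driftlessPath B X t r ω) - gradient f (X t ω)) :=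
  stronglyMeasurable_uncurry_of_continuous_of_stronglyMeasurable
    (fun ω ↦ (hg.comp (hB.continuous_driftlessPath t ω)).sub continuous_const)
    fun r ↦ (hg.comp_stronglyMeasurable (hX.stronglyMeasurable_driftlessPath hB t r)).sub
      (hg.comp_stronglyMeasurable (hX.stronglyMeasurable t))

variable [IsProbabilityMeasure P]

theorem memLp_sub_driftlessPath_and_lpNorm_le (hX : IsLangevinSolution ℱ f B X)
    (hB : IsStdBrownian P ℱ B) (hg : LipschitzWith K (gradient f)) (hg0 : gradient f 0 = 0)
    (ht : 0 ≤ t) (hXt : MemLp (X t) 2 P) (hKh : K * h ≤ 1 / 4) (hs : s ∈ Set.Ioc 0 h) :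
    MemLp (X (t + s) - driftlessPath B X t s) 2 P ∧
      lpNorm (X (t + s) - driftlessPath B X t s) 2 P ≤
        4 / 3 * K * (h * (lpNorm (X t) 2 P + √(2 * d * h))) := by
  have hh : 0 < h := hs.1.trans_le hs.2
  have hmeas := hX.stronglyMeasurable_driftlessPath hB t
  obtain ⟨hint, hint_le⟩ := memLp_intervalIntegral_and_lpNorm_le
    (stronglyMeasurable_uncurry_of_continuous_of_stronglyMeasurable
      (fun ω ↦ (hB.continuous_driftlessPath t ω).norm) fun r ↦ (hmeas r).norm) hh
    (fun r hr ↦ (hB.memLp_driftlessPath ht hr.1.le hXt).norm) fun r hr ↦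
      (lpNorm_norm (hmeas r).aestronglyMeasurable 2).trans_le
        (hB.lpNorm_driftlessPath_le ht hr hXt)
  have hpath (ω : Ω) : ‖(X (t + s) - driftlessPath B X t s) ω‖ ≤
      4 / 3 * K * ∫ r in (0 : ℝ)..h, ‖driftlessPath B X t r ω‖ :=
    norm_sub_le_of_eq_sub_integral hg hg0 (hX.continuous_add t ω)
      (hB.continuous_driftlessPath t ω) hh.le hKh
      (fun r hr ↦ hX.eq_driftlessPath_sub_integral hg.continuous ht hr.1 ω) ⟨hs.1.le, hs.2⟩
  refine ⟨(hint.const_mul (4 / 3 * K)).mono'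
    ((hX.stronglyMeasurable _).sub (hmeas s)).aestronglyMeasurable (.of_forall hpath),
    (lpNorm_mono_real (hint.const_mul (4 / 3 * K)) hpath).trans ?_⟩
  refine (lpNorm_const_smul (4 / 3 * K : ℝ) _ P).trans_le ?_
  rw [coe_nnnorm, Real.norm_of_nonneg (by positivity)]
  gcongr

theorem memLp_add (hX : IsLangevinSolution ℱ f B X) (hB : IsStdBrownian P ℱ B)
    (hg : LipschitzWith K (gradient f)) (hg0 : gradient f 0 = 0) (ht : 0 ≤ t)
    (hXt : MemLp (X t) 2 P) (hs : 0 < s) (hKs : K * s ≤ 1 / 4) : MemLp (X (t + s)) 2 P := by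
  have hsub :=
    (hX.memLp_sub_driftlessPath_and_lpNorm_le hB hg hg0 ht hXt hKs (Set.right_mem_Ioc.2 hs)).1
  simpa only [sub_add_cancel] using hsub.add (hB.memLp_driftlessPath ht hs.le hXt)

theorem memLp_feedbackError_and_lpNorm_le (hX : IsLangevinSolution ℱ f B X)
    (hB : IsStdBrownian P ℱ B) (hg : LipschitzWith K (gradient f)) (hg0 : gradient f 0 = 0)
    (ht : 0 ≤ t) (hXt : MemLp (X t) 2 P) (hh : 0 < h) (hKh : K * h ≤ 1 / 4) :
    MemLp (feedbackError f B X h t) 2 P ∧ lpNorm (feedbackError f B X h t) 2 P ≤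
      h * (K * (4 / 3 * K * (h * (lpNorm (X t) 2 P + √(2 * d * h))))) := by
  have hadd {r : ℝ} (hr : r ∈ Set.Ioc 0 h) : MemLp (X (t + r)) 2 P :=
    hX.memLp_add hB hg hg0 ht hXt hr.1 (hKh.trans' (by gcongr; exact hr.2))
  have hpath {r : ℝ} (hr : r ∈ Set.Ioc 0 h) := hB.memLp_driftlessPath ht hr.1.le hXt
  have hmeas := hX.stronglyMeasurable_driftlessPath hB t
  refine memLp_intervalIntegral_and_lpNorm_le
    (stronglyMeasurable_uncurry_of_continuous_of_stronglyMeasurable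
      (fun ω ↦ (hg.continuous.comp (hX.continuous_add t ω)).sub
        (hg.continuous.comp (hB.continuous_driftlessPath t ω)))
      fun r ↦ (hg.continuous.comp_stronglyMeasurable (hX.stronglyMeasurable _)).sub
        (hg.continuous.comp_stronglyMeasurable (hmeas r))) hh
    (fun r hr ↦ memLp_comp_sub_comp hg (hadd hr) (hpath hr)) fun r hr ↦ ?_
  refine (lpNorm_comp_sub_comp_le hg (hadd hr) (hpath hr)).trans ?_
  gcongr
  exact (hX.memLp_sub_driftlessPath_and_lpNorm_le hB hg hg0 ht hXt hKh hr).2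

theorem memLp_noiseError_and_lpNorm_le (hX : IsLangevinSolution ℱ f B X) (hB : IsStdBrownian P ℱ B)
    (hg : LipschitzWith K (gradient f)) (ht : 0 ≤ t) (hXt : MemLp (X t) 2 P) (hh : 0 < h) :
    MemLp (noiseError f B X h t) 2 P ∧
      lpNorm (noiseError f B X h t) 2 P ≤ h * (K * √(2 * d * h)) :=
  memLp_intervalIntegral_and_lpNorm_le
    (hX.stronglyMeasurable_uncurry_gradient_driftlessPath_sub hB hg.continuous t) hh
    (fun _ hr ↦ hB.memLp_gradient_driftlessPath_sub hg ht hXt hr.1.le)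
    fun _ hr ↦ hB.lpNorm_gradient_driftlessPath_sub_le hg ht hXt hr

theorem abs_integral_inner_noiseError_le (hX : IsLangevinSolution ℱ f B X)
    (hB : IsStdBrownian P ℱ B) (hg : LipschitzWith K (gradient f)) {G : ℝ} (hG : 0 ≤ G)
    (hbias : HasGaussianBias G (gradient f)) (ht : 0 ≤ t) (hXt : MemLp (X t) 2 P) (hh : 0 < h)
    {A : Ω → Euc d} (hA : StronglyMeasurable[ℱ t] A) (hA2 : MemLp A 2 P) :
    |∫ ω, inner ℝ (A ω) (noiseError f B X h t ω) ∂P| ≤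
      h * (lpNorm A 2 P * (2 * G * h * (2 + lpNorm (X t) 2 P + √(2 * d * h)))) := by
  refine abs_integral_inner_intervalIntegral_le
    (hX.stronglyMeasurable_uncurry_gradient_driftlessPath_sub hB hg.continuous t)
    (fun ω ↦ (hg.continuous.comp (hB.continuous_driftlessPath t ω)).sub continuous_const) hh.le hA2
    (fun _ hr ↦ hB.memLp_gradient_driftlessPath_sub hg ht hXt hr.1.le)
    (fun _ hr ↦ hB.lpNorm_gradient_driftlessPath_sub_le hg ht hXt hr) fun r hr ↦ ?_
  refine (hB.abs_integral_inner_sub_le_of_hasGaussianBias ht hr.1.le hg hG hbias hA hA2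
    (hX.adapted t) hXt).trans ?_
  have hA0 : 0 ≤ lpNorm A 2 P := lpNorm_nonneg
  have hX0 : 0 ≤ lpNorm (X t) 2 P := lpNorm_nonneg
  have hrh := hr.2
  gcongr

theorem memLp_localError_and_lpNorm_le (hX : IsLangevinSolution ℱ f B X) (hB : IsStdBrownian P ℱ B)
    (hg : LipschitzWith K (gradient f)) (hg0 : gradient f 0 = 0) (ht : 0 ≤ t)
    (hXt : MemLp (X t) 2 P) (hh : 0 < h) (hKh : K * h ≤ 1 / 4) :
    MemLp (localError f B X h t) 2 P ∧ lpNorm (localError f B X h t) 2 P ≤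
      4 / 3 * K ^ 2 * h ^ 2 * (lpNorm (X t) 2 P + √(2 * d * h)) + K * h * √(2 * d * h) := by
  obtain ⟨hfb, hfb_le⟩ := hX.memLp_feedbackError_and_lpNorm_le hB hg hg0 ht hXt hh hKh
  obtain ⟨hno, hno_le⟩ := hX.memLp_noiseError_and_lpNorm_le hB hg ht hXt hh
  rw [hX.localError_eq hB hg.continuous ht hh.le, lpNorm_neg]
  refine ⟨(hfb.add hno).neg, (lpNorm_add_le hfb one_le_two).trans ?_⟩
  linarith

theorem abs_integral_inner_localError_le (hX : IsLangevinSolution ℱ f B X)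
    (hB : IsStdBrownian P ℱ B) (hg : LipschitzWith K (gradient f)) (hg0 : gradient f 0 = 0)
    {G : ℝ} (hG : 0 ≤ G) (hbias : HasGaussianBias G (gradient f)) (ht : 0 ≤ t)
    (hXt : MemLp (X t) 2 P) (hh : 0 < h) (hKh : K * h ≤ 1 / 4)
    {A : Ω → Euc d} (hA : StronglyMeasurable[ℱ t] A) (hA2 : MemLp A 2 P) :
    |∫ ω, inner ℝ (A ω) (localError f B X h t ω) ∂P| ≤
      lpNorm A 2 P * (h ^ 2 * (4 / 3 * K ^ 2 * (lpNorm (X t) 2 P + √(2 * d * h)) +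
        2 * G * (2 + lpNorm (X t) 2 P + √(2 * d * h)))) := by
  obtain ⟨hfb, hfb_le⟩ := hX.memLp_feedbackError_and_lpNorm_le hB hg hg0 ht hXt hh hKh
  have hno := (hX.memLp_noiseError_and_lpNorm_le hB hg ht hXt hh).1
  have hfb_inner := abs_integral_inner_le_lpNorm_mul_lpNorm hA2 hfb
  have hno_inner := hX.abs_integral_inner_noiseError_le hB hg hG hbias ht hXt hh hA hA2
  have hfb_mul := mul_le_mul_of_nonneg_left hfb_le (lpNorm_nonneg (f := A) (p := 2) (μ := P))
  simp only [hX.localError_eq hB hg.continuous ht hh.le, Pi.neg_apply, Pi.add_apply,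
    inner_neg_right, inner_add_right, integral_neg, abs_neg]
  rw [integral_add (integrable_inner_of_memLp hA2 hfb) (integrable_inner_of_memLp hA2 hno)]
  refine (abs_add_le _ _).trans ?_
  linarith

end IsLangevinSolution

end LocalError

section GlobalError

variable {d : ℕ} {Ω : Type*} {mΩ : MeasurableSpace Ω} {P : Measure Ω} {ℱ : Filtration ℝ mΩ}
  {f : Euc d → ℝ} {B X : ℝ → Ω → Euc d} {m h t τ G : ℝ} {K ρ : ℝ≥0}

/-- The Langevin Monte Carlo iterates with step size `h` and starting point `x₀`, driven by the
increments of `B` along the grid of mesh `h`. -/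
noncomputable def lmcIterate (f : Euc d → ℝ) (B : ℝ → Ω → Euc d) (h : ℝ) (x₀ : Ω → Euc d) :
    ℕ → Ω → Euc d
  | 0 => x₀
  | k + 1 => fun ω ↦ gradientStep f h (lmcIterate f B h x₀ k ω) + langevinNoise B (k * h) h ω

theorem natCast_succ_mul (k : ℕ) (h : ℝ) : ((k + 1 : ℕ) : ℝ) * h = k * h + h := by
  push_cast
  ring

theorem eq_lmcIterate {Xb : ℕ → Ω → Euc d}
    (hXb : ∀ k : ℕ, Xb (k + 1) = fun ω ↦
      Xb k ω - h • gradient f (Xb k ω) + √2 • (B ((k + 1 : ℕ) * h) ω - B ((k : ℕ) * h) ω)) :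
    Xb = lmcIterate f B h (Xb 0) := by
  funext k
  induction k with
  | zero => rfl
  | succ k ih =>
    rw [hXb, lmcIterate, ← ih, natCast_succ_mul]
    rfl

theorem stronglyMeasurable_lmcIterate (hB : IsStdBrownian P ℱ B) (hg : Continuous (gradient f))
    (hh : 0 ≤ h) {x₀ : Ω → Euc d} (hx₀ : StronglyMeasurable[ℱ 0] x₀) (k : ℕ) :
    StronglyMeasurable[ℱ (k * h)] (lmcIterate f B h x₀ k) := by
  induction k with
  | zero => rwa [Nat.cast_zero, zero_mul]
  | succ k ih =>
    rw [natCast_succ_mul]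
    have hmono := ℱ.mono (by linarith : k * h ≤ k * h + h)
    have hstep : Continuous (gradientStep f h) := continuous_id.sub (hg.const_smul h)
    exact (hstep.comp_stronglyMeasurable (ih.mono hmono)).add
      (((hB.adapted (k * h + h)).sub ((hB.adapted (k * h)).mono hmono)).const_smul √2)

theorem memLp_gradientStep_comp {U : Ω → Euc d} (hρ : LipschitzWith ρ (gradientStep f h))
    (hg0 : gradient f 0 = 0) (hU : MemLp U 2 P) :
    MemLp (fun ω ↦ gradientStep f h (U ω)) 2 P :=
  hρ.comp_memLp (gradientStep_zero hg0 h) hU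

theorem lpNorm_gradientStep_comp_le {U : Ω → Euc d} (hρ : LipschitzWith ρ (gradientStep f h))
    (hg0 : gradient f 0 = 0) (hU : MemLp U 2 P) :
    lpNorm (fun ω ↦ gradientStep f h (U ω)) 2 P ≤ ρ * lpNorm U 2 P := by
  have := lpNorm_comp_sub_comp_le hρ hU MemLp.zero
  simpa only [Pi.zero_apply, gradientStep_zero hg0, sub_zero] using this

theorem memLp_lmcIterate (hB : IsStdBrownian P ℱ B) (hg0 : gradient f 0 = 0)
    (hρ : LipschitzWith ρ (gradientStep f h)) (hh : 0 ≤ h) {x₀ : Ω → Euc d} (hx₀ : MemLp x₀ 2 P)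
    (k : ℕ) : MemLp (lmcIterate f B h x₀ k) 2 P := by
  induction k with
  | zero => exact hx₀
  | succ k ih =>
    exact (memLp_gradientStep_comp hρ hg0 ih).add (hB.memLp_langevinNoise (by positivity) hh)

theorem eq_gradientStep_add_langevinNoise_add_localError (f : Euc d → ℝ) (B X : ℝ → Ω → Euc d)
    (h t : ℝ) :
    X (t + h) = (fun ω ↦ gradientStep f h (X t ω)) + langevinNoise B t h +
      localError f B X h t := by
  funext ω
  simp only [localError, Pi.add_apply, add_sub_cancel]

variable [IsProbabilityMeasure P]

theorem lpNorm_add_le_sqrt_add_lpNorm_localError (hX : IsLangevinSolution ℱ f B X)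
    (hB : IsStdBrownian P ℱ B) (hg0 : gradient f 0 = 0)
    (hρ : LipschitzWith ρ (gradientStep f h)) (ht : 0 ≤ t) (hh : 0 ≤ h) (hXt : MemLp (X t) 2 P) :
    lpNorm (X (t + h)) 2 P ≤ √((ρ * lpNorm (X t) 2 P) ^ 2 + 2 * d * h) +
      lpNorm (localError f B X h t) 2 P := by
  have hstep := memLp_gradientStep_comp hρ hg0 hXt
  rw [eq_gradientStep_add_langevinNoise_add_localError f B X h t]
  refine (lpNorm_add_le (hstep.add (hB.memLp_langevinNoise ht hh)) one_le_two).trans ?_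
  gcongr
  refine Real.le_sqrt_of_sq_le ?_
  rw [hB.lpNorm_add_langevinNoise_sq ht hh
    (hρ.continuous.comp_stronglyMeasurable (hX.adapted t)) hstep]
  gcongr
  · exact lpNorm_nonneg
  · exact lpNorm_gradientStep_comp_le hρ hg0 hXt

theorem lpNorm_add_sub_step_sq_le (hX : IsLangevinSolution ℱ f B X) (hB : IsStdBrownian P ℱ B)
    (hg : LipschitzWith K (gradient f)) (hg0 : gradient f 0 = 0) (hG : 0 ≤ G)
    (hbias : HasGaussianBias G (gradient f)) (hρ : LipschitzWith ρ (gradientStep f h))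
    (ht : 0 ≤ t) (hXt : MemLp (X t) 2 P) (hh : 0 < h) (hKh : K * h ≤ 1 / 4) {Y : Ω → Euc d}
    (hY : StronglyMeasurable[ℱ t] Y) (hY2 : MemLp Y 2 P) :
    lpNorm (X (t + h) - fun ω ↦ gradientStep f h (Y ω) + langevinNoise B t h ω) 2 P ^ 2 ≤
      (ρ * lpNorm (X t - Y) 2 P) ^ 2 + 2 * (ρ * lpNorm (X t - Y) 2 P * (h ^ 2 *
        (4 / 3 * K ^ 2 * (lpNorm (X t) 2 P + √(2 * d * h)) +
          2 * G * (2 + lpNorm (X t) 2 P + √(2 * d * h))))) +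
        lpNorm (localError f B X h t) 2 P ^ 2 := by
  let A : Ω → Euc d := fun ω ↦ gradientStep f h (X t ω) - gradientStep f h (Y ω)
  have hA : StronglyMeasurable[ℱ t] A := (hρ.continuous.comp_stronglyMeasurable (hX.adapted t)).sub
    (hρ.continuous.comp_stronglyMeasurable hY)
  have hA2 : MemLp A 2 P := memLp_comp_sub_comp hρ hXt hY2
  have hA_le : lpNorm A 2 P ≤ ρ * lpNorm (X t - Y) 2 P := lpNorm_comp_sub_comp_le hρ hXt hY2
  have hdecomp : (X (t + h) - fun ω ↦ gradientStep f h (Y ω) + langevinNoise B t h ω) =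
      A + localError f B X h t := by
    funext ω
    simp only [A, localError, Pi.sub_apply, Pi.add_apply]
    abel
  have hinner := (le_abs_self _).trans <|
    hX.abs_integral_inner_localError_le hB hg hg0 hG hbias ht hXt hh hKh hA hA2
  rw [hdecomp, lpNorm_add_two_sq hA2 (hX.memLp_localError_and_lpNorm_le hB hg hg0 ht hXt hh hKh).1]
  have hA0 : 0 ≤ lpNorm A 2 P := lpNorm_nonneg
  have hX0 : 0 ≤ lpNorm (X t) 2 P := lpNorm_nonneg
  gcongr
  refine hinner.trans ?_
  gcongr

/-- The step sizes for which the global error estimate holds, for a potential with Hessian between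
`m` and `K`; `τ` bounds the root mean square of the initial value and of the stationary law. -/
structure StepRegime (d : ℕ) (m : ℝ) (K : ℝ≥0) (h τ : ℝ) : Prop where
  pos : 0 < m
  le : m ≤ K
  step_pos : 0 < h
  step_le : 4 * K ^ 2 * h ≤ m
  one_le : 1 ≤ τ
  dim_le : 2 * d ≤ m * τ ^ 2

namespace StepRegime

theorem of_le_one_div (hm : 0 < m) (hmK : m ≤ K) (hh0 : 0 < h)
    (hh : h ≤ 1 / (4 * (K / m) * K)) {M : ℝ} (hM : 0 ≤ M) :
    StepRegime d m K h √(M + 2 * d / m + 1) where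
  pos := hm
  le := hmK
  step_pos := hh0
  step_le := by
    have hK : (0 : ℝ) < K := hm.trans_le hmK
    calc 4 * K ^ 2 * h ≤ 4 * K ^ 2 * (1 / (4 * (K / m) * K)) := by gcongr
      _ = m := by field_simp
  one_le := Real.one_le_sqrt.2 (le_add_of_nonneg_left (by positivity))
  dim_le := by
    rw [Real.sq_sqrt (by positivity)]
    calc 2 * d = m * (2 * d / m) := by field_simp
      _ ≤ m * (M + 2 * d / m + 1) := by gcongr; linarith

theorem mul_step_le (hr : StepRegime d m K h τ) : K * h ≤ 1 / 4 := by
  have hK : (0 : ℝ) < K := hr.pos.trans_le hr.le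
  have : K * (4 * (K * h)) ≤ K * 1 := by linarith [hr.step_le, hr.le]
  linarith [le_of_mul_le_mul_left this hK]

theorem sq_mul_step_le (hr : StepRegime d m K h τ) : (K * h) ^ 2 ≤ m * h / 4 := by
  nlinarith [hr.step_le, hr.step_pos]

theorem sqrt_mul_step_le (hr : StepRegime d m K h τ) : √(m * h) ≤ 1 / 2 := by
  refine (Real.sqrt_le_iff).2 ⟨by norm_num, ?_⟩
  nlinarith [hr.mul_step_le, hr.le, hr.step_pos]

theorem sqrt_noise_le (hr : StepRegime d m K h τ) : √(2 * d * h) ≤ √(m * h) * τ := by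
  have hτ : 0 ≤ τ := zero_le_one.trans hr.one_le
  calc √(2 * d * h) ≤ √(m * h * τ ^ 2) :=
        Real.sqrt_le_sqrt (by nlinarith [hr.dim_le, hr.step_pos])
    _ = √(m * h) * τ := by rw [Real.sqrt_mul' _ (sq_nonneg τ), Real.sqrt_sq hτ]

theorem sqrt_noise_le_half (hr : StepRegime d m K h τ) : √(2 * d * h) ≤ τ / 2 := by
  nlinarith [hr.sqrt_noise_le, hr.sqrt_mul_step_le, hr.one_le]

theorem mul_step_mem (hr : StepRegime d m K h τ) : m * h ∈ Set.Ioc 0 (1 / 4) :=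
  ⟨mul_pos hr.pos hr.step_pos,
    hr.mul_step_le.trans' (mul_le_mul_of_nonneg_right hr.le hr.step_pos.le)⟩

theorem sq_step_mul_bias_le (hr : StepRegime d m K h τ) (hG : 0 ≤ G) {M : ℝ} (hM : M ≤ 2 * τ) :
    h ^ 2 * (4 / 3 * K ^ 2 * (M + √(2 * d * h)) + 2 * G * (2 + M + √(2 * d * h))) ≤
      9 * (m * h) * ((K ^ 2 + G) * h * τ / m) := by
  have hτ := hr.one_le
  have hm := hr.pos
  have hnoise := hr.sqrt_noise_le_half
  calc h ^ 2 * (4 / 3 * K ^ 2 * (M + √(2 * d * h)) + 2 * G * (2 + M + √(2 * d * h)))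
      ≤ h ^ 2 * (4 / 3 * K ^ 2 * (27 / 4 * τ) + 2 * G * (9 / 2 * τ)) := by
        gcongr <;> linarith
    _ = 9 * (m * h) * ((K ^ 2 + G) * h * τ / m) := by
        field_simp
        ring

end StepRegime

theorem moment_recursion_le {a : ℝ} (ha : a ∈ Set.Ioc 0 (1 / 4)) (hτ : 0 ≤ τ) :
    √(((1 - a) * (2 * τ)) ^ 2 + a * τ ^ 2) + 4 / 3 * a * τ ≤ 2 * τ := by
  obtain ⟨ha0, ha1⟩ := ha
  have hsqrt : √(((1 - a) * (2 * τ)) ^ 2 + a * τ ^ 2) ≤ (2 - 4 / 3 * a) * τ := by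
    refine (Real.sqrt_le_left (by nlinarith)).2 ?_
    nlinarith [mul_nonneg (mul_nonneg ha0.le (by linarith : 0 ≤ 3 - 4 * a)) (sq_nonneg τ)]
  linarith

theorem error_recursion_le {a e Q : ℝ} (ha : a ∈ Set.Ioc 0 (1 / 4)) (he0 : 0 ≤ e)
    (he : e ≤ 10 * Q) :
    ((1 - a) * e) ^ 2 + 2 * ((1 - a) * e * (9 * a * Q)) + (8 / 3 * √a * Q) ^ 2 ≤
      (10 * Q) ^ 2 := by
  obtain ⟨ha0, ha1⟩ := ha
  have hQ : 0 ≤ Q := by linarith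
  have ha' : 0 ≤ 1 - a := by linarith
  calc ((1 - a) * e) ^ 2 + 2 * ((1 - a) * e * (9 * a * Q)) + (8 / 3 * √a * Q) ^ 2
      ≤ ((1 - a) * (10 * Q)) ^ 2 + 2 * ((1 - a) * (10 * Q) * (9 * a * Q)) +
          (8 / 3 * √a * Q) ^ 2 := by gcongr
    _ = (100 - (116 / 9 + 80 * a) * a) * Q ^ 2 := by
        linear_combination 64 / 9 * Q ^ 2 * Real.sq_sqrt ha0.le
    _ ≤ 100 * Q ^ 2 := by
        gcongr
        exact sub_le_self _ (by positivity)
    _ = (10 * Q) ^ 2 := by ring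

theorem lpNorm_localError_le_moment (hr : StepRegime d m K h τ) (hX : IsLangevinSolution ℱ f B X)
    (hB : IsStdBrownian P ℱ B) (hg : LipschitzWith K (gradient f)) (hg0 : gradient f 0 = 0)
    (ht : 0 ≤ t) (hXt : MemLp (X t) 2 P) (hXτ : lpNorm (X t) 2 P ≤ 2 * τ) :
    lpNorm (localError f B X h t) 2 P ≤ 4 / 3 * (m * h) * τ := by
  have hmh : √(m * h) ^ 2 = m * h := Real.sq_sqrt (mul_pos hr.pos hr.step_pos).le
  have hKh : K * h ≤ √(m * h) / 2 := by
    refine abs_le_of_sq_le_sq' ?_ (by positivity) |>.2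
    linarith [hr.sq_mul_step_le]
  have hm := hr.pos
  have hh := hr.step_pos
  have hX0 : 0 ≤ lpNorm (X t) 2 P := lpNorm_nonneg
  refine (hX.memLp_localError_and_lpNorm_le hB hg hg0 ht hXt hh hr.mul_step_le).2.trans ?_
  calc 4 / 3 * K ^ 2 * h ^ 2 * (lpNorm (X t) 2 P + √(2 * d * h)) + K * h * √(2 * d * h)
      = 4 / 3 * (K * h) ^ 2 * (lpNorm (X t) 2 P + √(2 * d * h)) + K * h * √(2 * d * h) := by ring
    _ ≤ 4 / 3 * (m * h / 4) * (2 * τ + τ / 2) + √(m * h) / 2 * (√(m * h) * τ) := by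
        gcongr
        exacts [hr.sq_mul_step_le, hr.sqrt_noise_le_half, hr.sqrt_noise_le]
    _ = 4 / 3 * (m * h) * τ := by linear_combination τ / 2 * hmh

theorem lpNorm_localError_le (hr : StepRegime d m K h τ) (hX : IsLangevinSolution ℱ f B X)
    (hB : IsStdBrownian P ℱ B) (hg : LipschitzWith K (gradient f)) (hg0 : gradient f 0 = 0)
    (ht : 0 ≤ t) (hXt : MemLp (X t) 2 P) (hXτ : lpNorm (X t) 2 P ≤ 2 * τ) :
    lpNorm (localError f B X h t) 2 P ≤ 8 / 3 * √(m * h) * (K ^ 2 * h * τ / m) := by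
  have hmh : √(m * h) ^ 2 = m * h := Real.sq_sqrt (mul_pos hr.pos hr.step_pos).le
  have hm := hr.pos
  have hτ := hr.one_le
  have hh := hr.step_pos
  have hK : K * h ≤ K ^ 2 * h / m := by
    rw [le_div_iff₀ hm]
    nlinarith [mul_nonneg K.coe_nonneg hh.le, hr.le]
  refine (hX.memLp_localError_and_lpNorm_le hB hg hg0 ht hXt hh hr.mul_step_le).2.trans ?_
  calc 4 / 3 * K ^ 2 * h ^ 2 * (lpNorm (X t) 2 P + √(2 * d * h)) + K * h * √(2 * d * h)
      ≤ 4 / 3 * K ^ 2 * h ^ 2 * (2 * τ + τ / 2) + K ^ 2 * h / m * (√(m * h) * τ) := by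
        gcongr
        exacts [hr.sqrt_noise_le_half, hr.sqrt_noise_le]
    _ = √(m * h) * (10 / 3 * √(m * h) + 1) * (K ^ 2 * h * τ / m) := by
        have hq : m * h * (K ^ 2 * h * τ / m) = K ^ 2 * h ^ 2 * τ := by field_simp
        linear_combination -10 / 3 * hq - 10 / 3 * (K ^ 2 * h * τ / m) * hmh
    _ ≤ √(m * h) * (10 / 3 * (1 / 2) + 1) * (K ^ 2 * h * τ / m) := by
        gcongr
        exact hr.sqrt_mul_step_le
    _ = 8 / 3 * √(m * h) * (K ^ 2 * h * τ / m) := by ring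

theorem lpNorm_add_le_two_mul (hr : StepRegime d m K h τ) (hX : IsLangevinSolution ℱ f B X)
    (hB : IsStdBrownian P ℱ B) (hg : LipschitzWith K (gradient f)) (hg0 : gradient f 0 = 0)
    (hρ : LipschitzWith (1 - m * h).toNNReal (gradientStep f h)) (ht : 0 ≤ t)
    (hXt : MemLp (X t) 2 P) (hXτ : lpNorm (X t) 2 P ≤ 2 * τ) :
    lpNorm (X (t + h)) 2 P ≤ 2 * τ := by
  have hh := hr.step_pos
  have hmh := hr.mul_step_mem
  have hρ0 : 0 ≤ 1 - m * h := by linarith [hmh.2]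
  have hX0 : 0 ≤ lpNorm (X t) 2 P := lpNorm_nonneg
  calc lpNorm (X (t + h)) 2 P
      ≤ √(((1 - m * h).toNNReal * lpNorm (X t) 2 P) ^ 2 + 2 * d * h) +
          lpNorm (localError f B X h t) 2 P :=
        lpNorm_add_le_sqrt_add_lpNorm_localError hX hB hg0 hρ ht hh.le hXt
    _ ≤ √(((1 - m * h) * (2 * τ)) ^ 2 + m * τ ^ 2 * h) + 4 / 3 * (m * h) * τ := by
        rw [Real.coe_toNNReal _ hρ0]
        have hdim := mul_le_mul_of_nonneg_right hr.dim_le hh.le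
        gcongr √(?_ ^ 2 + ?_) + ?_
        · gcongr
        · exact lpNorm_localError_le_moment hr hX hB hg hg0 ht hXt hXτ
    _ ≤ 2 * τ := by
        rw [mul_right_comm m]
        exact moment_recursion_le hmh (zero_le_one.trans hr.one_le)

theorem memLp_natCast_mul_and_lpNorm_le (hr : StepRegime d m K h τ)
    (hX : IsLangevinSolution ℱ f B X) (hB : IsStdBrownian P ℱ B)
    (hg : LipschitzWith K (gradient f)) (hg0 : gradient f 0 = 0)
    (hρ : LipschitzWith (1 - m * h).toNNReal (gradientStep f h)) (hX0 : MemLp (X 0) 2 P)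
    (hX0τ : lpNorm (X 0) 2 P ≤ 2 * τ) (k : ℕ) :
    MemLp (X (k * h)) 2 P ∧ lpNorm (X (k * h)) 2 P ≤ 2 * τ := by
  have hh := hr.step_pos
  induction k with
  | zero =>
    rw [Nat.cast_zero, zero_mul]
    exact ⟨hX0, hX0τ⟩
  | succ k ih =>
    have hk : 0 ≤ k * h := by positivity
    rw [natCast_succ_mul]
    exact ⟨hX.memLp_add hB hg hg0 hk ih.1 hh hr.mul_step_le,
      lpNorm_add_le_two_mul hr hX hB hg hg0 hρ hk ih.1 ih.2⟩

theorem lpNorm_add_sub_step_le (hr : StepRegime d m K h τ) (hX : IsLangevinSolution ℱ f B X)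
    (hB : IsStdBrownian P ℱ B) (hg : LipschitzWith K (gradient f)) (hg0 : gradient f 0 = 0)
    (hG : 0 ≤ G) (hbias : HasGaussianBias G (gradient f))
    (hρ : LipschitzWith (1 - m * h).toNNReal (gradientStep f h)) (ht : 0 ≤ t)
    (hXt : MemLp (X t) 2 P) (hXτ : lpNorm (X t) 2 P ≤ 2 * τ) {Y : Ω → Euc d}
    (hY : StronglyMeasurable[ℱ t] Y) (hY2 : MemLp Y 2 P)
    (hXY : lpNorm (X t - Y) 2 P ≤ 10 * ((K ^ 2 + G) * h * τ / m)) :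
    lpNorm (X (t + h) - fun ω ↦ gradientStep f h (Y ω) + langevinNoise B t h ω) 2 P ≤
      10 * ((K ^ 2 + G) * h * τ / m) := by
  have hτ := hr.one_le
  have hh := hr.step_pos
  have hm := hr.pos
  have hρ0 : 0 ≤ 1 - m * h := by linarith [hr.mul_step_mem.2]
  have hXY0 : 0 ≤ lpNorm (X t - Y) 2 P := lpNorm_nonneg
  have hlocal : lpNorm (localError f B X h t) 2 P ≤
      8 / 3 * √(m * h) * ((K ^ 2 + G) * h * τ / m) := by
    refine (lpNorm_localError_le hr hX hB hg hg0 ht hXt hXτ).trans ?_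
    gcongr
    exact le_add_of_nonneg_right hG
  refine (sq_le_sq₀ lpNorm_nonneg (by positivity)).1 ?_
  refine (lpNorm_add_sub_step_sq_le hX hB hg hg0 hG hbias hρ ht hXt hh hr.mul_step_le
    hY hY2).trans ?_
  rw [Real.coe_toNNReal _ hρ0]
  refine le_trans ?_ (error_recursion_le hr.mul_step_mem hXY0 hXY)
  gcongr _ + 2 * (_ * ?_) + ?_ ^ 2
  exacts [hr.sq_step_mul_bias_le hG hXτ, lpNorm_nonneg]

theorem memLp_sub_lmcIterate_and_lpNorm_le (hr : StepRegime d m K h τ)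
    (hX : IsLangevinSolution ℱ f B X) (hB : IsStdBrownian P ℱ B)
    (hg : LipschitzWith K (gradient f)) (hg0 : gradient f 0 = 0)
    (hG : 0 ≤ G) (hbias : HasGaussianBias G (gradient f))
    (hρ : LipschitzWith (1 - m * h).toNNReal (gradientStep f h)) (hX0 : MemLp (X 0) 2 P)
    (hX0τ : lpNorm (X 0) 2 P ≤ 2 * τ) (k : ℕ) :
    MemLp (X (k * h) - lmcIterate f B h (X 0) k) 2 P ∧
      lpNorm (X (k * h) - lmcIterate f B h (X 0) k) 2 P ≤ 10 * ((K ^ 2 + G) * h * τ / m) := by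
  have hh := hr.step_pos
  have hmoment := memLp_natCast_mul_and_lpNorm_le hr hX hB hg hg0 hρ hX0 hX0τ
  have hiter := memLp_lmcIterate hB hg0 hρ hh.le hX0
  refine ⟨(hmoment k).1.sub (hiter k), ?_⟩
  induction k with
  | zero =>
    have := hr.one_le
    have := hr.pos
    rw [Nat.cast_zero, zero_mul, lmcIterate, sub_self, lpNorm_zero]
    positivity
  | succ k ih =>
    rw [natCast_succ_mul]
    exact lpNorm_add_sub_step_le hr hX hB hg hg0 hG hbias hρ (by positivity) (hmoment k).1
      (hmoment k).2 (stronglyMeasurable_lmcIterate hB hg.continuous hh.le (hX.adapted 0) k)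
      (hiter k) ih

end GlobalError

theorem hasGaussianBias_gradient {d : ℕ} {f : Euc d → ℝ} {G : ℝ} {K : ℝ≥0} (hf : ContDiff ℝ 3 f)
    (hg : LipschitzWith K (gradient f)) (hG : 0 ≤ G)
    (hlapl : ∀ x, ‖gradient (lapl f) x‖ ≤ G * (1 + ‖x‖)) : HasGaussianBias G (gradient f) :=
  fun s hs x ↦ by
    rw [lapl_eq_laplacian] at hlapl
    simpa only [finrank_euclideanSpace_fin] using
      norm_integral_gradient_add_smul_sub_le hf hg hG hlapl hs x

theorem div_rpow_three_halves_mul_sqrt {m : ℝ} (hm : 0 < m) (c d M : ℝ) :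
    c / m ^ ((3 : ℝ) / 2) * √(2 * d + m * (M + 1)) = c * √(M + 2 * d / m + 1) / m := by
  have hpow : m ^ ((3 : ℝ) / 2) = m * √m := by
    rw [Real.sqrt_eq_rpow, ← Real.rpow_one_add' hm.le (by norm_num)]
    norm_num
  have hsqrt : √(2 * d + m * (M + 1)) = √m * √(M + 2 * d / m + 1) := by
    rw [← Real.sqrt_mul hm.le]
    congr 1
    field_simp
    ring
  have : 0 < √m := Real.sqrt_pos.2 hm
  rw [hpow, hsqrt]
  field_simp

/-- **Global strong integration error of LMC** (Theorem 1 instantiated to Langevin dynamics).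
Let `f ∈ C³` be `m`-strongly convex and `L`-smooth (`0 < m ≤ L`) with `∇f(0) = 0` and
`‖∇(Δf)(x)‖ ≤ G(1 + ‖x‖)` (with `G > 0`).  Let `X` solve the overdamped Langevin dynamics
with square-integrable initial value `x₀ = X_0`, and let `x̄_k` be the LMC iterates with step
size `h` driven by the same Brownian motion, `x̄₀ = x₀`,
`x̄_k = x̄_{k-1} - h ∇f(x̄_{k-1}) + √2 (B_{kh} - B_{(k-1)h})`.
Then for every `0 < h ≤ 1/(4κL)` and every `k`:
`(E‖X_{kh} - x̄_k‖²)^{1/2} ≤ C_LMC h` with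
`C_LMC = (10 (L² + G)/m^{3/2}) √(2d + m (E‖x₀‖² + 1))`. -/
theorem lmc_global_strong_error
    {d : ℕ} {Ω : Type*} {mΩ : MeasurableSpace Ω} {P : Measure Ω} [IsProbabilityMeasure P]
    {ℱ : Filtration ℝ mΩ} {f : Euc d → ℝ} {m L G : ℝ}
    (hm : 0 < m) (hmL : m ≤ L) (hf : ContDiff ℝ 3 f) (hHess : HessianBounds m L f)
    (hgrad0 : gradient f 0 = 0) (hG : 0 < G)
    (hlapl : ∀ x : Euc d, ‖gradient (lapl f) x‖ ≤ G * (1 + ‖x‖))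
    {B X : ℝ → Ω → Euc d} (hB : IsStdBrownian P ℱ B)
    (hX : IsLangevinSolution ℱ f B X) (hX0 : MemLp (X 0) 2 P)
    {h : ℝ} (hh0 : 0 < h) (hh1 : h ≤ 1 / (4 * (L / m) * L))
    {Xb : ℕ → Ω → Euc d} (hXb0 : Xb 0 = X 0)
    (hXb : ∀ k : ℕ, Xb (k + 1) = fun ω =>
      Xb k ω - h • gradient f (Xb k ω) +
        Real.sqrt 2 • (B ((k + 1 : ℕ) * h) ω - B ((k : ℕ) * h) ω))
    (k : ℕ) :
    (∫⁻ ω, (‖X ((k : ℕ) * h) ω - Xb k ω‖₊ : ℝ≥0∞) ^ 2 ∂P) ^ (1/2 : ℝ) ≤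
      ENNReal.ofReal
        (10 * (L ^ 2 + G) / m ^ ((3:ℝ)/2) *
          Real.sqrt (2 * d + m * ((∫ ω, ‖X 0 ω‖ ^ 2 ∂P) + 1)) * h) := by
  lift L to ℝ≥0 using hm.le.trans hmL
  have hM : 0 ≤ ∫ ω, ‖X 0 ω‖ ^ 2 ∂P := integral_nonneg fun ω ↦ sq_nonneg _
  have hr := StepRegime.of_le_one_div (d := d) hm hmL hh0 hh1 hM
  have hf2 : ContDiff ℝ 2 f := hf.of_le (by norm_num)
  have hg := lipschitzWith_gradient_of_hessianBounds hf2 hm.le hHess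
  have hbias := hasGaussianBias_gradient hf hg hG.le hlapl
  have hstep := lipschitzWith_gradientStep hf2 hmL hHess hh0.le (by linarith [hr.mul_step_le])
  have hinit : lpNorm (X 0) 2 P ≤ 2 * √((∫ ω, ‖X 0 ω‖ ^ 2 ∂P) + 2 * d / m + 1) := by
    have : 0 ≤ 2 * d / m := by positivity
    refine (Real.le_sqrt_of_sq_le ?_).trans (le_mul_of_one_le_left (Real.sqrt_nonneg _) one_le_two)
    linarith [lpNorm_two_sq hX0]
  obtain ⟨hmem, herror⟩ :=
    memLp_sub_lmcIterate_and_lpNorm_le hr hX hB hg hgrad0 hG.le hbias hstep hX0 hinit k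
  rw [eq_lmcIterate hXb, hXb0, div_rpow_three_halves_mul_sqrt hm]
  exact (lintegral_nnnorm_sq_rpow_half_eq hmem).trans_le
    (ENNReal.ofReal_le_ofReal (herror.trans_eq (by ring)))
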